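/- arXiv:1403.6737 — 3 statements merged into one kernel-verified Lean document; each statement's English description precedes it below -/
import Mathlib

section
/- Let X be a K-convex Banach space. Then there exist a real number ρ with 0 < ρ < 2 and an integer n ≥ 1 such that for every collection P_1, …, P_n of mutually commuting norm-one projections on X (i.e., bounded linear operators with P_k ∘ P_k = P_k, ‖P_k‖ = 1, and P_j ∘ P_k = P_k ∘ P_j for all j, k), one has ‖∏_{k=1}^n (Id_X − P_k)‖ ≤ ρ^n in operator norm. -/
open Finset

/-- The `k`-th Rademacher function on the discrete cube `{-1,1}ⁿ`, modelled on `Fin n → Bool`. -/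
def rademacher {n : ℕ} (k : Fin n) (σ : Fin n → Bool) : ℝ := if σ k then 1 else -1

/-- A Banach space `X` is K-convex if the Rademacher projections are uniformly bounded:
there is a constant `C` such that for every `n ≥ 1` and every `f : {-1,1}ⁿ → X`,
`(𝔼‖∑ₖ εₖ · 𝔼[εₖ f]‖²)^{1/2} ≤ C (𝔼‖f‖²)^{1/2}`, where `𝔼` denotes the average over the
uniform probability measure on the discrete cube. -/
def KConvex (X : Type*) [NormedAddCommGroup X] [NormedSpace ℝ X] : Prop :=
  ∃ C : ℝ, ∀ n : ℕ, 1 ≤ n → ∀ f : (Fin n → Bool) → X,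
    Real.sqrt ((2 ^ n : ℝ)⁻¹ * ∑ σ : Fin n → Bool,
        ‖∑ k : Fin n, rademacher k σ •
          ((2 ^ n : ℝ)⁻¹ • ∑ τ : Fin n → Bool, rademacher k τ • f τ)‖ ^ 2)
      ≤ C * Real.sqrt ((2 ^ n : ℝ)⁻¹ * ∑ σ : Fin n → Bool, ‖f σ‖ ^ 2)

/-!
Suppose that `‖∏ₖ (1 - Pₖ)‖` exceeds `2ⁿ - 1/2`, and norm the product by a vector `x` of norm at
most one and a functional `φ` of norm one. Each of the `2ⁿ` terms `∏_{k ∈ S} (-Pₖ) x` of the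
expanded product has norm at most one, so `φ` is at least `1/2` on every one of them.
Given signs of the coefficients `bⱼ`, the contraction `∏_{bᵢ ≥ 0} (-Pᵢ)` turns each `bⱼ Pⱼ x` into
`|bⱼ|` times such a term, because `Pⱼ` is absorbed if `bⱼ ≥ 0` and contributes a new factor `-Pⱼ`
otherwise. Hence `‖∑ⱼ bⱼ Pⱼ x‖ ≥ (1/2) ∑ⱼ |bⱼ|`.

A K-convex space has no such families of arbitrary length. If `f` maps the cube `{-1,1}ᴺ`
bijectively onto a family of length `2ᴺ` with lower `ℓ₁`-constant `c`, then the norm of the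
Rademacher projection of `f` at any point is at least `c` times the `L¹` norm of a Rademacher sum
with `N` coefficients `±1`, and comparing second and fourth moments bounds this `L¹` norm below by
`√(N / 3)`. So for some `n` the product has norm at most `2ⁿ - 1/2 < 2ⁿ`.
-/

open scoped BigOperators

section RademacherSums

/-- The Rademacher sum `∑ₖ aₖ εₖ` with coefficients `a`, as a function on the discrete cube. -/
def rademacherSum {n : ℕ} (a : Fin n → ℝ) (τ : Fin n → Bool) : ℝ :=
  ∑ k, a k * rademacher k τ

variable {n : ℕ}

lemma expect_cube (g : (Fin n → Bool) → ℝ) : 𝔼 σ, g σ = (2 ^ n : ℝ)⁻¹ * ∑ σ, g σ := by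
  simp [Fintype.expect_eq_sum_div_card, div_eq_inv_mul]

lemma rademacher_sq (k : Fin n) (σ : Fin n → Bool) : rademacher k σ ^ 2 = 1 := by
  unfold rademacher
  split_ifs <;> norm_num

lemma rademacherSum_cons (a : Fin (n + 1) → ℝ) (b : Bool) (τ : Fin n → Bool) :
    rademacherSum a (Fin.cons b τ) =
      rademacherSum (Fin.tail a) τ + if b then a 0 else -a 0 := by
  cases b <;> simp [rademacherSum, rademacher, Fin.sum_univ_succ, Fin.tail, add_comm]

lemma expect_comp_rademacherSum_succ (φ : ℝ → ℝ) (a : Fin (n + 1) → ℝ) :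
    𝔼 τ, φ (rademacherSum a τ) =
      𝔼 τ, (φ (rademacherSum (Fin.tail a) τ + a 0) +
        φ (rademacherSum (Fin.tail a) τ - a 0)) / 2 := by
  calc 𝔼 τ, φ (rademacherSum a τ)
      = 𝔼 p : Bool × (Fin n → Bool), φ (rademacherSum a (Fin.cons p.1 p.2)) :=
        (Fintype.expect_equiv (Fin.consEquiv fun _ ↦ Bool) _ _ fun _ ↦ rfl).symm
    _ = _ := by
        rw [← univ_product_univ, expect_product, expect_comm]
        refine expect_congr rfl fun τ _ ↦ ?_
        rw [Fintype.expect_eq_sum_div_card]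
        simp [rademacherSum_cons, sub_eq_add_neg]

lemma expect_rademacherSum_sq (a : Fin n → ℝ) :
    𝔼 τ, rademacherSum a τ ^ 2 = ∑ k, a k ^ 2 := by
  induction n with
  | zero => simp [rademacherSum]
  | succ n ih =>
    calc 𝔼 τ, rademacherSum a τ ^ 2
        = 𝔼 τ, (a 0 ^ 2 + rademacherSum (Fin.tail a) τ ^ 2) := by
          rw [expect_comp_rademacherSum_succ (· ^ 2)]
          exact expect_congr rfl fun τ _ ↦ by ring
      _ = ∑ k, a k ^ 2 := by
          rw [expect_add_distrib, Fintype.expect_const, ih, Fin.sum_univ_succ]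
          rfl

lemma expect_rademacherSum_pow_four_le (a : Fin n → ℝ) :
    𝔼 τ, rademacherSum a τ ^ 4 ≤ 3 * (∑ k, a k ^ 2) ^ 2 := by
  induction n with
  | zero => simp [rademacherSum]
  | succ n ih =>
    calc 𝔼 τ, rademacherSum a τ ^ 4
        = 𝔼 τ, (a 0 ^ 4 + 6 * a 0 ^ 2 * rademacherSum (Fin.tail a) τ ^ 2
            + rademacherSum (Fin.tail a) τ ^ 4) := by
          rw [expect_comp_rademacherSum_succ (· ^ 4)]
          exact expect_congr rfl fun τ _ ↦ by ring
      _ = a 0 ^ 4 + 6 * a 0 ^ 2 * ∑ k, Fin.tail a k ^ 2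
            + 𝔼 τ, rademacherSum (Fin.tail a) τ ^ 4 := by
          rw [expect_add_distrib, expect_add_distrib, Fintype.expect_const, ← mul_expect,
            expect_rademacherSum_sq]
      _ ≤ 3 * a 0 ^ 4 + 6 * a 0 ^ 2 * ∑ k, Fin.tail a k ^ 2
            + 3 * (∑ k, Fin.tail a k ^ 2) ^ 2 := by
          gcongr
          · exact le_mul_of_one_le_left (by positivity) (by norm_num)
          · exact ih _
      _ = 3 * (∑ k, a k ^ 2) ^ 2 := by
          rw [Fin.sum_univ_succ]
          simp only [Fin.tail]
          ring

/- Cauchy–Schwarz gives `(∑ f²)² ≤ ∑ |f| · ∑ |f|³` and `(∑ |f|³)² ≤ ∑ f² · ∑ f⁴`. -/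
lemma sum_sq_pow_three_le {ι : Type*} (s : Finset ι) (f : ι → ℝ) :
    (∑ i ∈ s, f i ^ 2) ^ 3 ≤ (∑ i ∈ s, |f i|) ^ 2 * ∑ i ∈ s, f i ^ 4 := by
  have h₁ : (∑ i ∈ s, f i ^ 2) ^ 2 ≤ (∑ i ∈ s, |f i|) * ∑ i ∈ s, |f i| ^ 3 :=
    sum_sq_le_sum_mul_sum_of_sq_le_mul s (fun _ _ ↦ by positivity) (fun _ _ ↦ by positivity)
      fun i _ ↦ by rw [← sq_abs (f i)]; exact le_of_eq (by ring)
  have h₂ : (∑ i ∈ s, |f i| ^ 3) ^ 2 ≤ (∑ i ∈ s, f i ^ 2) * ∑ i ∈ s, f i ^ 4 :=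
    sum_sq_le_sum_mul_sum_of_sq_le_mul s (fun _ _ ↦ by positivity) (fun _ _ ↦ by positivity)
      fun i _ ↦ by
        rw [← sq_abs (f i), ← Even.pow_abs (by decide : Even 4) (f i)]; exact le_of_eq (by ring)
  rcases (sum_nonneg fun i _ ↦ sq_nonneg (f i) : 0 ≤ ∑ i ∈ s, f i ^ 2).eq_or_lt with h₀ | h₀
  · rw [← h₀, zero_pow three_ne_zero]
    positivity
  · refine le_of_mul_le_mul_left ?_ h₀
    calc (∑ i ∈ s, f i ^ 2) * (∑ i ∈ s, f i ^ 2) ^ 3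
        = ((∑ i ∈ s, f i ^ 2) ^ 2) ^ 2 := by ring
      _ ≤ ((∑ i ∈ s, |f i|) * ∑ i ∈ s, |f i| ^ 3) ^ 2 := by gcongr
      _ = (∑ i ∈ s, |f i|) ^ 2 * (∑ i ∈ s, |f i| ^ 3) ^ 2 := mul_pow _ _ _
      _ ≤ (∑ i ∈ s, |f i|) ^ 2 * ((∑ i ∈ s, f i ^ 2) * ∑ i ∈ s, f i ^ 4) := by gcongr
      _ = (∑ i ∈ s, f i ^ 2) * ((∑ i ∈ s, |f i|) ^ 2 * ∑ i ∈ s, f i ^ 4) := by ring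

lemma expect_sq_pow_three_le {ι : Type*} (s : Finset ι) (f : ι → ℝ) :
    (𝔼 i ∈ s, f i ^ 2) ^ 3 ≤ (𝔼 i ∈ s, |f i|) ^ 2 * 𝔼 i ∈ s, f i ^ 4 := by
  simp only [expect_eq_sum_div_card, div_pow, div_mul_div_comm, ← pow_succ]
  gcongr
  exact sum_sq_pow_three_le s f

theorem khinchin_sq_le (a : Fin n → ℝ) :
    ∑ k, a k ^ 2 ≤ 3 * (𝔼 τ, |rademacherSum a τ|) ^ 2 := by
  rcases (sum_nonneg fun k _ ↦ sq_nonneg (a k) : 0 ≤ ∑ k, a k ^ 2).eq_or_lt with h₀ | h₀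
  · rw [← h₀]
    positivity
  · refine le_of_mul_le_mul_left ?_ (pow_pos h₀ 2)
    calc (∑ k, a k ^ 2) ^ 2 * ∑ k, a k ^ 2
        = (𝔼 τ, rademacherSum a τ ^ 2) ^ 3 := by rw [expect_rademacherSum_sq]; ring
      _ ≤ (𝔼 τ, |rademacherSum a τ|) ^ 2 * 𝔼 τ, rademacherSum a τ ^ 4 :=
          expect_sq_pow_three_le _ _
      _ ≤ (𝔼 τ, |rademacherSum a τ|) ^ 2 * (3 * (∑ k, a k ^ 2) ^ 2) := by
          gcongr
          exact expect_rademacherSum_pow_four_le a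
      _ = (∑ k, a k ^ 2) ^ 2 * (3 * (𝔼 τ, |rademacherSum a τ|) ^ 2) := by ring

lemma sqrt_le_expect_abs_rademacherSum (σ : Fin n → Bool) :
    √(n / 3) ≤ 𝔼 τ, |rademacherSum (fun k ↦ rademacher k σ) τ| := by
  have h := khinchin_sq_le fun k ↦ rademacher k σ
  simp only [rademacher_sq, sum_const, card_univ, Fintype.card_fin, nsmul_one] at h
  rw [Real.sqrt_le_left (expect_nonneg fun _ _ ↦ abs_nonneg _)]
  linarith

end RademacherSums

section RademacherProjection

variable {X : Type*} [AddCommGroup X] [Module ℝ X] {n : ℕ}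

/-- The Rademacher projection `∑ₖ εₖ · 𝔼[εₖ f]` of a function `f` on the discrete cube. -/
noncomputable def rademacherProj (f : (Fin n → Bool) → X) (σ : Fin n → Bool) : X :=
  ∑ k : Fin n, rademacher k σ •
    ((2 ^ n : ℝ)⁻¹ • ∑ τ : Fin n → Bool, rademacher k τ • f τ)

lemma rademacherProj_eq_sum_rademacherSum_smul (f : (Fin n → Bool) → X) (σ : Fin n → Bool) :
    rademacherProj f σ =
      (2 ^ n : ℝ)⁻¹ • ∑ τ, rademacherSum (fun k ↦ rademacher k σ) τ • f τ := by
  simp only [rademacherProj, rademacherSum, sum_smul, smul_sum]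
  rw [sum_comm]
  refine sum_congr rfl fun τ _ ↦ sum_congr rfl fun k _ ↦ ?_
  module

end RademacherProjection

section LowerL1Estimates

variable {X : Type*} [SeminormedAddCommGroup X] [NormedSpace ℝ X]

/-- A finite family `v` satisfies a lower `ℓ₁`-estimate with constant `c` if
`‖∑ⱼ bⱼ vⱼ‖ ≥ c ∑ⱼ |bⱼ|` for all real coefficients. For `v` in the unit ball and `c > 0` this says
that the span of `v` is `c⁻¹`-isomorphic to `ℓ₁(ι)`. -/
def HasLowerL1Estimate {ι : Type*} [Fintype ι] (c : ℝ) (v : ι → X) : Prop :=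
  ∀ b : ι → ℝ, c * ∑ j, |b j| ≤ ‖∑ j, b j • v j‖

lemma HasLowerL1Estimate.mono {ι : Type*} [Fintype ι] {c c' : ℝ} {v : ι → X}
    (hv : HasLowerL1Estimate c v) (hc : c' ≤ c) : HasLowerL1Estimate c' v :=
  fun b ↦ (mul_le_mul_of_nonneg_right hc (sum_nonneg fun _ _ ↦ abs_nonneg _)).trans (hv b)

lemma HasLowerL1Estimate.comp_equiv {ι κ : Type*} [Fintype ι] [Fintype κ] {c : ℝ} {v : ι → X}
    (hv : HasLowerL1Estimate c v) (e : κ ≃ ι) : HasLowerL1Estimate c (v ∘ e) := by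
  intro b
  have h := hv (b ∘ e.symm)
  rw [← e.sum_comp, ← e.sum_comp] at h
  simpa using h

lemma HasLowerL1Estimate.le_norm_rademacherProj {n : ℕ} {c : ℝ} (hc : 0 ≤ c)
    {f : (Fin n → Bool) → X} (hf : HasLowerL1Estimate c f) (σ : Fin n → Bool) :
    c * √(n / 3) ≤ ‖rademacherProj f σ‖ := by
  calc c * √(n / 3)
      ≤ c * 𝔼 τ, |rademacherSum (fun k ↦ rademacher k σ) τ| := by
        gcongr
        exact sqrt_le_expect_abs_rademacherSum σ
    _ = (2 ^ n : ℝ)⁻¹ * (c * ∑ τ, |rademacherSum (fun k ↦ rademacher k σ) τ|) := by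
        rw [expect_cube, mul_left_comm]
    _ ≤ (2 ^ n : ℝ)⁻¹ * ‖∑ τ, rademacherSum (fun k ↦ rademacher k σ) τ • f τ‖ := by
        gcongr
        exact hf _
    _ = ‖rademacherProj f σ‖ := by
        rw [rademacherProj_eq_sum_rademacherSum_smul, norm_smul,
          Real.norm_of_nonneg (by positivity)]

end LowerL1Estimates

section KConvexity

variable {X : Type*} [NormedAddCommGroup X] [NormedSpace ℝ X]

lemma KConvex.exists_const (hX : KConvex X) :
    ∃ C : ℝ, ∀ n : ℕ, 1 ≤ n → ∀ f : (Fin n → Bool) → X,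
      √(𝔼 σ, ‖rademacherProj f σ‖ ^ 2) ≤ C * √(𝔼 σ, ‖f σ‖ ^ 2) := by
  simp only [expect_cube]
  exact hX

theorem KConvex.exists_not_hasLowerL1Estimate (hX : KConvex X) {c : ℝ} (hc : 0 < c) :
    ∃ n : ℕ, 1 ≤ n ∧ ∀ v : Fin n → X, (∀ j, ‖v j‖ ≤ 1) → ¬ HasLowerL1Estimate c v := by
  obtain ⟨C, hC⟩ := hX.exists_const
  obtain ⟨N, hN⟩ := exists_nat_gt (3 * (|C| / c) ^ 2)
  have hN₁ : 1 ≤ N := by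
    have : (0 : ℝ) < N := lt_of_le_of_lt (by positivity) hN
    exact_mod_cast this
  have hCN : |C| < c * √(N / 3) := by
    rw [← div_lt_iff₀' hc]
    exact Real.lt_sqrt_of_sq_lt (by linarith)
  refine ⟨2 ^ N, Nat.one_le_two_pow, fun v hv hL ↦ hCN.not_ge ?_⟩
  let e : (Fin N → Bool) ≃ Fin (2 ^ N) := Fintype.equivFinOfCardEq (by simp)
  calc c * √(N / 3)
      ≤ √(𝔼 σ, ‖rademacherProj (v ∘ e) σ‖ ^ 2) := by
        refine Real.le_sqrt_of_sq_le (le_expect univ_nonempty fun σ _ ↦ ?_)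
        gcongr
        exact (hL.comp_equiv e).le_norm_rademacherProj hc.le σ
    _ ≤ C * √(𝔼 σ, ‖(v ∘ e) σ‖ ^ 2) := hC N hN₁ _
    _ ≤ |C| * √(𝔼 σ, ‖(v ∘ e) σ‖ ^ 2) := by
        gcongr
        exact le_abs_self C
    _ ≤ |C| := by
        refine mul_le_of_le_one_right (abs_nonneg C) (Real.sqrt_le_one.mpr ?_)
        exact expect_le univ_nonempty fun σ _ ↦ pow_le_one₀ (norm_nonneg _) (hv _)

end KConvexity

section CommutingContractions

variable {A X ι : Type*} [CommRing A] [SeminormedAddCommGroup X] [Module A X]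

lemma norm_prod_smul_le {a : ι → A} {s : Finset ι} (ha : ∀ i ∈ s, ∀ x : X, ‖a i • x‖ ≤ ‖x‖)
    (x : X) : ‖(∏ i ∈ s, a i) • x‖ ≤ ‖x‖ :=
  prod_induction a (fun c ↦ ∀ x : X, ‖c • x‖ ≤ ‖x‖)
    (fun c d hc hd x ↦ by rw [mul_smul]; exact (hc _).trans (hd x)) (fun x ↦ by rw [one_smul]) ha x

/-- The product expands into `2 ^ #s` contractions, one of which is `∏ i ∈ t, a i`. -/
lemma norm_prod_one_add_smul_sub_prod_smul_le {a : ι → A} {s t : Finset ι} (hts : t ⊆ s)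
    (ha : ∀ i ∈ s, ∀ x : X, ‖a i • x‖ ≤ ‖x‖) (x : X) :
    ‖(∏ i ∈ s, (1 + a i)) • x - (∏ i ∈ t, a i) • x‖ ≤ (2 ^ #s - 1) * ‖x‖ := by
  classical
  have ht : t ∈ s.powerset := mem_powerset.mpr hts
  calc ‖(∏ i ∈ s, (1 + a i)) • x - (∏ i ∈ t, a i) • x‖
      = ‖∑ u ∈ s.powerset.erase t, (∏ i ∈ u, a i) • x‖ := by
        rw [prod_one_add, sum_smul, ← sum_erase_add _ _ ht, add_sub_cancel_right]
    _ ≤ ∑ _u ∈ s.powerset.erase t, ‖x‖ := norm_sum_le_of_le _ fun u hu ↦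
        norm_prod_smul_le (fun i hi ↦ ha i (mem_powerset.mp (mem_of_mem_erase hu) hi)) x
    _ = (2 ^ #s - 1) * ‖x‖ := by
        rw [sum_const, card_erase_of_mem ht, card_powerset, nsmul_eq_mul,
          Nat.cast_pred (by positivity), Nat.cast_pow, Nat.cast_ofNat]

end CommutingContractions

section LowerL1OfProjections

variable {A X ι : Type*} [CommRing A]

lemma prod_neg_mul_of_mem {p : ι → A} {s : Finset ι} {j : ι} (hj : j ∈ s)
    (hp : IsIdempotentElem (p j)) : (∏ i ∈ s, -p i) * p j = ∏ i ∈ s, -p i := by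
  classical
  rw [← prod_erase_mul _ _ hj, mul_assoc, neg_mul, hp.eq]

lemma prod_neg_smul_sum_smul [Fintype ι] [DecidableEq ι] [AddCommGroup X] [Module A X]
    [Module ℝ X] [SMulCommClass A ℝ X] {p : ι → A} (hp : ∀ i, IsIdempotentElem (p i))
    (b : ι → ℝ) (x : X) :
    (∏ i with 0 ≤ b i, -p i) • ∑ j, b j • p j • x =
      ∑ j, |b j| • (∏ i ∈ insert j ({i | 0 ≤ b i} : Finset ι), -p i) • x := by
  rw [smul_sum]
  refine sum_congr rfl fun j _ ↦ ?_
  rw [smul_comm, ← mul_smul]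
  rcases le_or_gt 0 (b j) with hb | hb
  · have hj : j ∈ ({i | 0 ≤ b i} : Finset ι) := by simpa using hb
    rw [prod_neg_mul_of_mem hj (hp j), insert_eq_of_mem hj, abs_of_nonneg hb]
  · have hj : j ∉ ({i | 0 ≤ b i} : Finset ι) := by simpa using hb
    rw [prod_insert hj, abs_of_neg hb, mul_comm, neg_mul, neg_smul, neg_smul, smul_neg, neg_neg]

lemma sub_mul_sum_le_norm_sum_smul [SeminormedAddCommGroup X] [NormedSpace ℝ X] {s : Finset ι}
    {w : ι → ℝ} (hw : ∀ j ∈ s, 0 ≤ w j) {y : X} {z : ι → X} {δ : ℝ}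
    (hz : ∀ j ∈ s, ‖y - z j‖ ≤ δ) :
    (‖y‖ - δ) * ∑ j ∈ s, w j ≤ ‖∑ j ∈ s, w j • z j‖ := by
  have hdev : ‖∑ j ∈ s, w j • (y - z j)‖ ≤ δ * ∑ j ∈ s, w j := by
    rw [mul_comm, sum_mul]
    refine norm_sum_le_of_le _ fun j hj ↦ ?_
    rw [norm_smul, Real.norm_of_nonneg (hw j hj)]
    exact mul_le_mul_of_nonneg_left (hz j hj) (hw j hj)
  calc (‖y‖ - δ) * ∑ j ∈ s, w j
      = ‖(∑ j ∈ s, w j) • y‖ - δ * ∑ j ∈ s, w j := by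
        rw [norm_smul, Real.norm_of_nonneg (sum_nonneg hw)]
        ring
    _ ≤ ‖(∑ j ∈ s, w j) • y‖ - ‖∑ j ∈ s, w j • (y - z j)‖ := by gcongr
    _ ≤ ‖(∑ j ∈ s, w j) • y - ∑ j ∈ s, w j • (y - z j)‖ := norm_sub_norm_le _ _
    _ = ‖∑ j ∈ s, w j • z j‖ := by simp [smul_sub, sum_smul]

theorem hasLowerL1Estimate_smul [Fintype ι] [SeminormedAddCommGroup X] [NormedSpace ℝ X]
    [Module A X] [SMulCommClass A ℝ X] {p : ι → A} (hp : ∀ i, IsIdempotentElem (p i))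
    (hp₁ : ∀ i, ∀ x : X, ‖p i • x‖ ≤ ‖x‖) (x : X) :
    HasLowerL1Estimate (‖(∏ i, (1 - p i)) • x‖ - (2 ^ Fintype.card ι - 1) * ‖x‖)
      (fun j ↦ p j • x) := by
  classical
  intro b
  have hneg (i : ι) (y : X) : ‖-p i • y‖ ≤ ‖y‖ := by simpa using hp₁ i y
  have hterm (t : Finset ι) : ‖(∏ i, (1 - p i)) • x - (∏ i ∈ t, -p i) • x‖ ≤
      (2 ^ Fintype.card ι - 1) * ‖x‖ := by
    simp only [sub_eq_add_neg (1 : A)]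
    exact norm_prod_one_add_smul_sub_prod_smul_le (subset_univ t) (fun i _ ↦ hneg i) x
  calc (‖(∏ i, (1 - p i)) • x‖ - (2 ^ Fintype.card ι - 1) * ‖x‖) * ∑ j, |b j|
      ≤ ‖∑ j, |b j| • (∏ i ∈ insert j ({i | 0 ≤ b i} : Finset ι), -p i) • x‖ :=
        sub_mul_sum_le_norm_sum_smul (fun j _ ↦ abs_nonneg _) fun j _ ↦ hterm _
    _ = ‖(∏ i with 0 ≤ b i, -p i) • ∑ j, b j • p j • x‖ := by rw [prod_neg_smul_sum_smul hp]
    _ ≤ ‖∑ j, b j • p j • x‖ := norm_prod_smul_le (fun i _ ↦ hneg i) _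

end LowerL1OfProjections

section Operators

variable {n : ℕ}

open scoped IsMulCommutative in
lemma hasLowerL1Estimate_apply {X : Type*} [SeminormedAddCommGroup X] [NormedSpace ℝ X]
    {P : Fin n → X →L[ℝ] X} (hP : ∀ k, IsIdempotentElem (P k)) (hP₁ : ∀ k, ‖P k‖ ≤ 1)
    (hcomm : ∀ j k, Commute (P j) (P k)) (x : X) :
    HasLowerL1Estimate (‖(List.ofFn fun k ↦ 1 - P k).prod x‖ - (2 ^ n - 1) * ‖x‖)
      (fun j ↦ P j x) := by
  let A := Subring.closure (Set.range P)
  have : IsMulCommutative A := Subring.isMulCommutative_closure <| by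
    rintro _ ⟨j, rfl⟩ _ ⟨k, rfl⟩
    exact hcomm j k
  let p (k : Fin n) : A := ⟨P k, Subring.subset_closure ⟨k, rfl⟩⟩
  have hprod : ((∏ k, (1 - p k) : A) : X →L[ℝ] X) = (List.ofFn fun k ↦ 1 - P k).prod := by
    rw [← List.prod_ofFn, ← Subring.coe_subtype, map_list_prod, List.map_ofFn]
    rfl
  have h := hasLowerL1Estimate_smul (X := X) (p := p) (fun k ↦ Subtype.ext (hP k))
    (fun k y ↦ (P k).le_of_opNorm_le (hP₁ k) y |>.trans_eq (one_mul _)) x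
  rw [Fintype.card_fin] at h
  rw [← hprod]
  exact h

lemma exists_hasLowerL1Estimate_of_lt_norm {X : Type*} [NormedAddCommGroup X] [NormedSpace ℝ X]
    {P : Fin n → X →L[ℝ] X} (hP : ∀ k, IsIdempotentElem (P k)) (hP₁ : ∀ k, ‖P k‖ ≤ 1)
    (hcomm : ∀ j k, Commute (P j) (P k)) {c : ℝ}
    (hc : 2 ^ n - 1 + c < ‖(List.ofFn fun k ↦ 1 - P k).prod‖) :
    ∃ v : Fin n → X, (∀ j, ‖v j‖ ≤ 1) ∧ HasLowerL1Estimate c v := by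
  obtain ⟨x, hx, hlt⟩ := ContinuousLinearMap.exists_lt_apply_of_lt_opNorm _ hc
  refine ⟨fun j ↦ P j x, fun j ↦ ?_, (hasLowerL1Estimate_apply hP hP₁ hcomm x).mono ?_⟩
  · exact ((P j).le_of_opNorm_le_of_le (hP₁ j) hx.le).trans_eq (one_mul 1)
  · have hpow : (0 : ℝ) ≤ 2 ^ n - 1 := sub_nonneg.mpr (one_le_pow₀ one_le_two)
    linarith [mul_le_of_le_one_right hpow hx.le]

end Operators

lemma exists_pos_lt_pow_eq {r b : ℝ} {n : ℕ} (hr : 0 < r) (hb : 0 ≤ b) (hn : n ≠ 0)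
    (hrb : r < b ^ n) : ∃ ρ, 0 < ρ ∧ ρ < b ∧ ρ ^ n = r := by
  have hpow : (r ^ (n⁻¹ : ℝ)) ^ n = r := Real.rpow_inv_natCast_pow hr.le hn
  exact ⟨r ^ (n⁻¹ : ℝ), by positivity, lt_of_pow_lt_pow_left₀ n hb (hpow.trans_lt hrb), hpow⟩

theorem kconvex_projections {X : Type*} [NormedAddCommGroup X] [NormedSpace ℝ X]
    (hX : KConvex X) :
    ∃ ρ : ℝ, 0 < ρ ∧ ρ < 2 ∧ ∃ n : ℕ, 1 ≤ n ∧
      ∀ P : Fin n → X →L[ℝ] X,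
        (∀ k, P k ∘L P k = P k) →
        (∀ k, ‖P k‖ = 1) →
        (∀ j k, P j ∘L P k = P k ∘L P j) →
        ‖(List.ofFn (fun k => 1 - P k)).prod‖ ≤ ρ ^ n := by
  obtain ⟨n, hn, hL⟩ := hX.exists_not_hasLowerL1Estimate one_half_pos
  have htwo : (1 : ℝ) ≤ 2 ^ n := one_le_pow₀ one_le_two
  obtain ⟨ρ, hρ₀, hρ₂, hρ⟩ : ∃ ρ : ℝ, 0 < ρ ∧ ρ < 2 ∧ ρ ^ n = 2 ^ n - 1 + 1 / 2 :=
    exists_pos_lt_pow_eq (by linarith) zero_le_two (Nat.one_le_iff_ne_zero.mp hn) (by linarith)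
  refine ⟨ρ, hρ₀, hρ₂, n, hn, fun P hidem hnorm hcomm ↦ ?_⟩
  rw [hρ]
  by_contra! hlt
  obtain ⟨v, hv, hvL⟩ :=
    exists_hasLowerL1Estimate_of_lt_norm hidem (fun k ↦ (hnorm k).le) hcomm hlt
  exact hL v hv hvL
end

section
/- A Banach space X is K-convex if and only if X does not contain ℓ¹_n's uniformly, that is, if and only if it is NOT the case that for every integer n ≥ 1 and every λ > 1 there exist vectors x_1, …, x_n ∈ X such that λ^{-1} ∑_{i=1}^n |a_i| ≤ ‖∑_{i=1}^n a_i x_i‖ ≤ ∑_{i=1}^n |a_i| for all real scalars a_1, …, a_n. -/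
open Finset

/-- A Banach space contains `ℓ¹ₙ`'s uniformly if for every `n ≥ 1` and every `λ > 1` there are
vectors `x₁, …, xₙ` with `λ⁻¹ ∑ |aᵢ| ≤ ‖∑ aᵢ xᵢ‖ ≤ ∑ |aᵢ|` for all real scalars. -/
def ContainsL1nUniformly (X : Type*) [NormedAddCommGroup X] [NormedSpace ℝ X] : Prop :=
  ∀ n : ℕ, 1 ≤ n → ∀ lam : ℝ, 1 < lam → ∃ x : Fin n → X, ∀ a : Fin n → ℝ,
    lam⁻¹ * (∑ i, |a i|) ≤ ‖∑ i, a i • x i‖ ∧ ‖∑ i, a i • x i‖ ≤ ∑ i, |a i|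

/-! If `X` does not contain `ℓ¹ₙ`'s uniformly, then it is B-convex, and so are its `ℓ²`-sums. Hence
on `L²({-1,1}ᵐ; X)` a product of `K` operators `1 - eⱼ`, with `eⱼ` commuting contractive
idempotents, has norm at most `2 ^ K - δ`, where `δ > 0` does not depend on `m`. The operators
`r e^{-tN}`, where `0 ≤ r ≤ 1` and `N w_B = |B| w_B` on Walsh functions, are convex combinations of
such idempotents, so `1 + r e^{-tN}` has an inverse bounded independently of `m`, `r` and `t`. As
in Kato's criterion, this makes the semigroup analytic: `‖N e^{-tN}‖ ≤ C / t`. The Rademacher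
projection is the spectral projection of `N` at `1`, and expanding `sin (π (N - 1)) / (π (N - 1))`
into its Taylor series bounds it independently of `m`.

Conversely, if `X` contains `ℓ¹` of the cube `{-1,1}ⁿ`, then the Rademacher projection of the
function `τ ↦ e_τ` has norm of order `√n` by Khintchine's inequality. -/

section ScalarIntegrals

open MeasureTheory Set Filter Topology
open scoped FourierTransform Real

lemma integral_sin_mul_exp_neg (y : ℝ) :
    ∫ r in (0 : ℝ)..π, Real.sin r * Real.exp (-(r * y)) =
      (1 + Real.exp (-(π * y))) / (1 + y ^ 2) := by
  have hderiv : ∀ r ∈ uIcc 0 π, HasDerivAt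
      (fun r => -(y * Real.sin r + Real.cos r) * Real.exp (-(r * y)) / (1 + y ^ 2))
      (Real.sin r * Real.exp (-(r * y))) r := by
    intro r _
    refine (((((Real.hasDerivAt_sin r).const_mul y).add (Real.hasDerivAt_cos r)).neg.mul
      ((hasDerivAt_id r).mul_const y).neg.exp).div_const (1 + y ^ 2)).congr_deriv ?_
    simp only [Pi.neg_apply, Pi.add_apply, id]
    field_simp
    ring
  have hcont : Continuous fun r => Real.sin r * Real.exp (-(r * y)) := by fun_prop
  rw [intervalIntegral.integral_eq_sub_of_hasDerivAt hderiv (hcont.intervalIntegrable _ _)]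
  simp
  ring

lemma norm_cexp_neg_mul (z : ℂ) (s : ℝ) :
    ‖Complex.exp (-(z * s))‖ = Real.exp (-(z.re * s)) := by
  simp [Complex.norm_exp]

lemma integrableOn_sq_mul_cexp_neg {z : ℂ} (hz : 0 < z.re) :
    IntegrableOn (fun s : ℝ => (s : ℂ) ^ 2 * Complex.exp (-(z * s))) (Ioi 0) := by
  have hreal : IntegrableOn (fun s : ℝ => s ^ 2 * Real.exp (-(z.re * s))) (Ioi 0) := by
    simpa using integrableOn_rpow_mul_exp_neg_mul_rpow (p := 1) (s := 2) (by norm_num)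
      one_pos hz
  refine hreal.mono' (by fun_prop) (ae_of_all _ fun s => ?_)
  simp [norm_cexp_neg_mul]

lemma tendsto_pow_mul_cexp_neg {z : ℂ} (hz : 0 < z.re) (n : ℕ) :
    Tendsto (fun s : ℝ => (s : ℂ) ^ n * Complex.exp (-(z * s))) atTop (𝓝 0) := by
  have h := ((Real.tendsto_pow_mul_exp_neg_atTop_nhds_zero n).comp
    (tendsto_id.const_mul_atTop hz)).const_mul (z.re ^ n)⁻¹
  rw [mul_zero] at h
  refine tendsto_zero_iff_norm_tendsto_zero.2 (h.congr' ?_)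
  filter_upwards [eventually_ge_atTop 0] with s hs
  simp only [Function.comp_apply, id, mul_pow, norm_mul, norm_cexp_neg_mul, norm_pow,
    Complex.norm_real, Real.norm_of_nonneg hs]
  field_simp

lemma integral_Ioi_sq_mul_cexp_neg {z : ℂ} (hz : 0 < z.re) :
    ∫ s in Ioi (0 : ℝ), (s : ℂ) ^ 2 * Complex.exp (-(z * s)) = 2 / z ^ 3 := by
  have hz0 : z ≠ 0 := by rintro rfl; simp at hz
  have hderiv : ∀ s ∈ Ici (0 : ℝ), HasDerivAt
      (fun s : ℝ => -((s : ℂ) ^ 2 / z + 2 * s / z ^ 2 + 2 / z ^ 3) * Complex.exp (-(z * s)))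
      ((s : ℂ) ^ 2 * Complex.exp (-(z * s))) s := by
    intro s _
    have hs : HasDerivAt (fun s : ℝ => (s : ℂ)) 1 s := Complex.ofRealCLM.hasDerivAt
    refine ((((hs.pow 2).div_const z).add ((hs.const_mul 2).div_const (z ^ 2))).add_const
      (2 / z ^ 3)).neg.mul (hs.const_mul z).neg.cexp |>.congr_deriv ?_
    simp only [Pi.add_apply, Pi.pow_apply, Pi.neg_apply]
    field_simp
    ring
  have hlim : Tendsto
      (fun s : ℝ => -((s : ℂ) ^ 2 / z + 2 * s / z ^ 2 + 2 / z ^ 3) * Complex.exp (-(z * s)))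
      atTop (𝓝 0) := by
    have h := (((tendsto_pow_mul_cexp_neg hz 2).const_mul (-1 / z)).add
      ((tendsto_pow_mul_cexp_neg hz 1).const_mul (-2 / z ^ 2))).add
      ((tendsto_pow_mul_cexp_neg hz 0).const_mul (-2 / z ^ 3))
    simp only [mul_zero, add_zero] at h
    exact h.congr fun s => by ring
  rw [integral_Ioi_of_hasDerivAt_of_tendsto' hderiv (integrableOn_sq_mul_cexp_neg hz) hlim]
  simp

lemma integrable_inv_sq_add_sq {y : ℝ} (hy : 0 < y) :
    Integrable fun w : ℝ => (y ^ 2 + w ^ 2)⁻¹ := by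
  refine ((integrable_inv_one_add_sq.comp_div hy.ne').const_mul (y ^ 2)⁻¹).congr
    (ae_of_all _ fun w => ?_)
  field_simp

lemma sq_norm_ofReal_add_mul_I (y w : ℝ) : ‖(y : ℂ) + w * Complex.I‖ ^ 2 = y ^ 2 + w ^ 2 := by
  rw [Complex.sq_norm, Complex.normSq_add_mul_I]

lemma integrable_two_div_add_mul_I_pow_three {y : ℝ} (hy : 0 < y) :
    Integrable fun w : ℝ => (2 : ℂ) / (y + w * Complex.I) ^ 3 := by
  have hne : ∀ w : ℝ, (y : ℂ) + w * Complex.I ≠ 0 := fun w h => by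
    simpa [hy.ne'] using congrArg Complex.re h
  refine ((integrable_inv_sq_add_sq hy).const_mul (2 / y)).mono' ?_ (ae_of_all _ fun w => ?_)
  · exact (continuous_const.div (by fun_prop) fun w => pow_ne_zero 3 (hne w)).aestronglyMeasurable
  · have hle : y ≤ ‖(y : ℂ) + w * Complex.I‖ := by
      simpa [abs_of_pos hy] using Complex.abs_re_le_norm ((y : ℂ) + w * Complex.I)
    rw [norm_div, norm_pow, pow_succ, sq_norm_ofReal_add_mul_I, Complex.norm_ofNat,
      ← div_eq_mul_inv, div_div, mul_comm y]
    gcongr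

lemma two_div_add_mul_I_pow_three_re (y w : ℝ) :
    ((2 : ℂ) / (y + w * Complex.I) ^ 3).re =
      2 * (y ^ 3 - 3 * y * w ^ 2) / (y ^ 2 + w ^ 2) ^ 3 := by
  rw [Complex.div_re, ← sq_norm_ofReal_add_mul_I, map_pow, ← Complex.sq_norm]
  simp [pow_succ]
  ring

/-- The function `s ↦ s² e^{-ys}` on `s ≥ 0`, extended by zero; its Fourier transform is
absolutely integrable, so that it can be recovered by Fourier inversion. -/
noncomputable def sqExp (y s : ℝ) : ℂ := (max s 0 : ℝ) ^ 2 * Complex.exp (-(y * s))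

lemma sqExp_eq_indicator (y : ℝ) :
    sqExp y =
      (Set.Ioi 0).indicator fun s : ℝ => (s : ℂ) ^ 2 * Complex.exp (-(y * s)) := by
  ext s
  rcases lt_or_ge 0 s with hs | hs
  · simp [sqExp, hs, hs.le]
  · simp [sqExp, hs]

lemma fourier_sqExp {y : ℝ} (hy : 0 < y) (ξ : ℝ) :
    𝓕 (sqExp y) ξ = 2 / (y + (2 * π * ξ : ℝ) * Complex.I) ^ 3 := by
  rw [Real.fourier_real_eq_integral_exp_smul, ← integral_Ioi_sq_mul_cexp_neg (by simpa using hy),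
    ← integral_indicator measurableSet_Ioi, sqExp_eq_indicator]
  congr 1 with s
  simp only [indicator_apply, smul_eq_mul, mul_ite, mul_zero, mul_left_comm _ ((s : ℂ) ^ 2),
    ← Complex.exp_add]
  push_cast
  ring_nf

lemma sqExp_eq_integral {y : ℝ} (hy : 0 < y) (s : ℝ) :
    sqExp y s = ∫ ξ : ℝ, Complex.exp ((2 * π * ξ * s : ℝ) * Complex.I) *
      (2 / (y + (2 * π * ξ : ℝ) * Complex.I) ^ 3) := by
  have hint : Integrable (sqExp y) := by
    rw [sqExp_eq_indicator, integrable_indicator_iff measurableSet_Ioi]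
    exact integrableOn_sq_mul_cexp_neg (by simpa using hy)
  have hFint : Integrable (𝓕 (sqExp y)) := by
    rw [funext (fourier_sqExp hy)]
    exact (integrable_two_div_add_mul_I_pow_three hy).comp_mul_left' (by positivity)
  have hcont : Continuous (sqExp y) := by unfold sqExp; fun_prop
  rw [← hint.fourierInv_fourier_eq hFint hcont.continuousAt, Real.fourierInv_eq']
  simp only [fourier_sqExp hy, smul_eq_mul, RCLike.inner_apply, conj_trivial]
  congr 1 with ξ
  ring_nf

/-- Fourier inversion at `1` and at `-1`, where the function vanishes, turns the exponential kernel
into a cosine. -/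
lemma exp_neg_eq_integral_cos_mul {y : ℝ} (hy : 0 < y) :
    (Real.exp (-y) : ℂ) = |(2 * π)⁻¹| •
      ∫ w : ℝ, 2 * (Real.cos w : ℂ) * (2 / (y + w * Complex.I) ^ 3) := by
  let F : ℝ → ℂ := fun w => 2 / (y + w * Complex.I) ^ 3
  have hFexp (s : ℝ) : Integrable fun ξ : ℝ =>
      Complex.exp ((2 * π * ξ * s : ℝ) * Complex.I) * F (2 * π * ξ) :=
    ((integrable_two_div_add_mul_I_pow_three hy).comp_mul_left' (by positivity)).bdd_mul (c := 1)
      (by fun_prop) (ae_of_all _ fun ξ => (Complex.norm_exp_ofReal_mul_I _).le)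
  have h1 : sqExp y 1 = Real.exp (-y) := by simp [sqExp]
  have h2 : sqExp y (-1) = 0 := by simp [sqExp]
  rw [← Measure.integral_comp_mul_left (fun w : ℝ => 2 * (Real.cos w : ℂ) * F w) (2 * π), ← h1,
    ← add_zero (sqExp y 1), ← h2, sqExp_eq_integral hy, sqExp_eq_integral hy,
    ← integral_add (hFexp 1) (hFexp (-1))]
  congr 1 with ξ
  rw [Complex.ofReal_cos, Complex.cos]
  simp only [F]
  push_cast
  ring_nf

lemma mul_exp_neg_eq_integral {y : ℝ} (hy : 0 < y) :
    y * Real.exp (-y) =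
      2 / π * ∫ w : ℝ, Real.cos w * ((y ^ 4 - 3 * y ^ 2 * w ^ 2) / (y ^ 2 + w ^ 2) ^ 3) := by
  have hre (w : ℝ) : RCLike.re (2 * (Real.cos w : ℂ) * (2 / (y + w * Complex.I) ^ 3)) =
      Real.cos w * (4 * (y ^ 3 - 3 * y * w ^ 2) / (y ^ 2 + w ^ 2) ^ 3) := by
    rw [RCLike.re_eq_complex_re, mul_assoc, ← Complex.ofReal_ofNat 2,
      Complex.re_ofReal_mul, Complex.re_ofReal_mul, Complex.ofReal_ofNat,
      two_div_add_mul_I_pow_three_re]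
    ring
  have hint : Integrable fun w : ℝ => 2 * (Real.cos w : ℂ) * (2 / (y + w * Complex.I) ^ 3) :=
    (integrable_two_div_add_mul_I_pow_three hy).bdd_mul (c := 2) (by fun_prop)
      (ae_of_all _ fun w => by
        rw [norm_mul, Complex.norm_real]
        simpa using Real.abs_cos_le_one w)
  have hexp : Real.exp (-y) = |(2 * π)⁻¹| * ∫ w : ℝ,
      Real.cos w * (4 * (y ^ 3 - 3 * y * w ^ 2) / (y ^ 2 + w ^ 2) ^ 3) := by
    have := congrArg Complex.re (exp_neg_eq_integral_cos_mul hy)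
    rwa [Complex.ofReal_re, Complex.real_smul, Complex.re_ofReal_mul,
      ← RCLike.re_eq_complex_re, ← integral_re hint, integral_congr_ae (ae_of_all _ hre)] at this
  rw [hexp, abs_of_pos (by positivity), ← integral_const_mul, ← integral_const_mul,
    ← integral_const_mul]
  congr 1 with w
  field_simp
  ring

lemma integrable_cos_mul_fourier_symbol {y : ℝ} (hy : 0 < y) :
    Integrable fun w : ℝ =>
      Real.cos w * ((y ^ 4 - 3 * y ^ 2 * w ^ 2) / (y ^ 2 + w ^ 2) ^ 3) := by
  refine ((integrable_inv_sq_add_sq hy).const_mul 3).mono' ?_ (ae_of_all _ fun w => ?_)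
  · exact (Real.continuous_cos.mul ((by fun_prop : Continuous _).div (by fun_prop)
      fun w => by positivity)).aestronglyMeasurable
  · have hnum : |y ^ 4 - 3 * y ^ 2 * w ^ 2| ≤ 3 * (y ^ 2 + w ^ 2) ^ 2 := by
      rw [abs_le]
      constructor <;>
        nlinarith [sq_nonneg (y ^ 2), sq_nonneg (w ^ 2), mul_nonneg (sq_nonneg y) (sq_nonneg w)]
    have hpos : 0 < y ^ 2 + w ^ 2 := by positivity
    rw [norm_mul, norm_div, Real.norm_eq_abs, Real.norm_eq_abs,
      Real.norm_of_nonneg (pow_pos hpos 3).le]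
    calc |Real.cos w| * _ ≤ 1 * (3 * (y ^ 2 + w ^ 2) ^ 2 / (y ^ 2 + w ^ 2) ^ 3) := by
          gcongr
          exact Real.abs_cos_le_one w
      _ = 3 * (y ^ 2 + w ^ 2)⁻¹ := by field_simp

end ScalarIntegrals

section SemigroupBounds

open MeasureTheory Set
open scoped Real

variable {ι : Type*} [Finite ι]

/-- Hahn-Banach reduces the estimate to real-valued integrals, so no completeness is needed. -/
lemma norm_map_integral_le {E Ω : Type*} [NormedAddCommGroup E] [NormedSpace ℝ E]
    [MeasurableSpace Ω] {μ : Measure Ω} (L : (ι → ℝ) →ₗ[ℝ] E) {F : Ω → ι → ℝ} {g : Ω → ℝ}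
    (hF : ∀ i, Integrable (fun r => F r i) μ) (hg : Integrable g μ)
    (hle : ∀ᵐ r ∂μ, ‖L (F r)‖ ≤ g r) :
    ‖L fun i => ∫ r, F r i ∂μ‖ ≤ ∫ r, g r ∂μ := by
  have := Fintype.ofFinite ι
  obtain ⟨φ, hφ, hφL⟩ := exists_dual_vector'' ℝ (L fun i => ∫ r, F r i ∂μ)
  let ψ : (ι → ℝ) →L[ℝ] ℝ := LinearMap.toContinuousLinearMap (φ.toLinearMap ∘ₗ L)
  have hint : Integrable F μ := .of_eval hF
  have heval : (fun i => ∫ r, F r i ∂μ) = ∫ r, F r ∂μ := funext fun i => (eval_integral hF i).symm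
  calc ‖L fun i => ∫ r, F r i ∂μ‖
      = ψ (∫ r, F r ∂μ) := by rw [← heval]; exact hφL.symm
    _ = ∫ r, ψ (F r) ∂μ := (ψ.integral_comp_comm hint).symm
    _ ≤ ∫ r, g r ∂μ := integral_mono_ae (ψ.integrable_comp hint) hg <| hle.mono fun r hr =>
        (le_abs_self _).trans <| (φ.le_of_opNorm_le hφ (L (F r))).trans (by simpa using hr)

variable {𝒜 : Type*} [NormedRing 𝒜] [NormedAlgebra ℝ 𝒜] {M : (ι → ℝ) →ₐ[ℝ] 𝒜} {y : ι → ℝ}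

lemma norm_map_inv_le_one (hy : ∀ i, 0 < y i)
    (hexp : ∀ r, 0 ≤ r → ‖M fun i => Real.exp (-(r * y i))‖ ≤ Real.exp (-r)) :
    ‖M fun i => (y i)⁻¹‖ ≤ 1 := by
  have hinv : (fun i => (y i)⁻¹) = fun i => ∫ r in Ioi 0, Real.exp (-(r * y i)) := by
    ext i
    simpa [mul_comm] using (integral_exp_mul_Ioi (neg_neg_of_pos (hy i)) 0).symm
  rw [hinv, ← integral_exp_neg_Ioi_zero]
  refine norm_map_integral_le M.toLinearMap (fun i => ?_) (integrableOn_exp_neg_Ioi 0)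
    ((ae_restrict_iff' measurableSet_Ioi).2 (ae_of_all _ fun r hr => hexp r (le_of_lt hr)))
  simpa [IntegrableOn, mul_comm] using integrableOn_exp_mul_Ioi (neg_neg_of_pos (hy i)) 0

lemma norm_map_inv_one_add_sq_le {B : ℝ}
    (hexp : ∀ r, 0 ≤ r → ‖M fun i => Real.exp (-(r * y i))‖ ≤ 1)
    (hinv : ∀ r, 0 ≤ r → ‖M fun i => (1 + Real.exp (-(r * y i)))⁻¹‖ ≤ B) :
    ‖M fun i => (1 + y i ^ 2)⁻¹‖ ≤ 2 * B := by
  have hint : ‖M fun i => ∫ r in Ioc 0 π, Real.sin r * Real.exp (-(r * y i))‖ ≤ 2 := by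
    have h2 : ∫ r in Ioc 0 π, Real.sin r = 2 := by
      rw [← intervalIntegral.integral_of_le Real.pi_pos.le, integral_sin]
      norm_num
    rw [← h2]
    refine norm_map_integral_le M.toLinearMap (fun i => ?_)
      (Real.continuous_sin.integrableOn_Ioc)
      ((ae_restrict_iff' measurableSet_Ioc).2 (ae_of_all _ fun r hr => ?_))
    · exact Continuous.integrableOn_Ioc (by fun_prop)
    · have hsin := Real.sin_nonneg_of_nonneg_of_le_pi hr.1.le hr.2
      change ‖M (Real.sin r • fun i => Real.exp (-(r * y i)))‖ ≤ _
      rw [map_smul, norm_smul, Real.norm_of_nonneg hsin]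
      exact mul_le_of_le_one_right hsin (hexp r hr.1.le)
  have hsplit : (fun i => (1 + y i ^ 2)⁻¹) =
      (fun i => (1 + Real.exp (-(π * y i)))⁻¹) *
        fun i => ∫ r in Ioc 0 π, Real.sin r * Real.exp (-(r * y i)) := by
    ext i
    rw [Pi.mul_apply, ← intervalIntegral.integral_of_le Real.pi_pos.le, integral_sin_mul_exp_neg]
    field_simp
  rw [hsplit, map_mul, mul_comm 2 B]
  exact norm_mul_le_of_le (hinv π Real.pi_pos.le) hint

lemma norm_map_sq_div_sq_add_sq_le {B : ℝ}
    (hexp : ∀ r, 0 ≤ r → ‖M fun i => Real.exp (-(r * y i))‖ ≤ 1)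
    (hinv : ∀ r, 0 ≤ r → ‖M fun i => (1 + Real.exp (-(r * y i)))⁻¹‖ ≤ B) (w : ℝ) :
    ‖M fun i => w ^ 2 / (y i ^ 2 + w ^ 2)‖ ≤ 2 * B := by
  rcases eq_or_ne w 0 with rfl | hw
  · have h0 : (fun i => (0 : ℝ) ^ 2 / (y i ^ 2 + 0 ^ 2)) = 0 := by ext; simp
    rw [h0, map_zero, norm_zero]
    linarith [(norm_nonneg _).trans (hinv 0 le_rfl)]
  have hscale : (fun i => w ^ 2 / (y i ^ 2 + w ^ 2)) = fun i => (1 + (|w|⁻¹ * y i) ^ 2)⁻¹ := by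
    ext i
    rw [mul_pow, inv_pow, sq_abs]
    field_simp
    ring
  rw [hscale]
  refine norm_map_inv_one_add_sq_le (fun r hr => ?_) (fun r hr => ?_)
  · simpa only [mul_assoc] using hexp (r * |w|⁻¹) (by positivity)
  · simpa only [mul_assoc] using hinv (r * |w|⁻¹) (by positivity)

lemma norm_map_fourier_symbol_le [NormOneClass 𝒜] {B : ℝ} (hy : ∀ i, 0 < y i)
    (hexp : ∀ r, 0 ≤ r → ‖M fun i => Real.exp (-(r * y i))‖ ≤ Real.exp (-r))
    (hinv : ∀ r, 0 ≤ r → ‖M fun i => (1 + Real.exp (-(r * y i)))⁻¹‖ ≤ B) (w : ℝ) :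
    ‖M fun i => (y i ^ 4 - 3 * y i ^ 2 * w ^ 2) / (y i ^ 2 + w ^ 2) ^ 3‖ ≤
      8 * (1 + 2 * B) ^ 3 * (1 + w ^ 2)⁻¹ := by
  have : 0 ≤ B := (norm_nonneg _).trans (hinv 0 le_rfl)
  set D := 1 + 2 * B with hD
  let v : ι → ℝ := fun i => (y i)⁻¹
  let k : ι → ℝ := fun i => w ^ 2 / (y i ^ 2 + w ^ 2)
  set s : ι → ℝ := fun i => (y i ^ 4 - 3 * y i ^ 2 * w ^ 2) / (y i ^ 2 + w ^ 2) ^ 3 with hs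
  have hv : ‖M v‖ ≤ 1 := norm_map_inv_le_one hy hexp
  have hk2 : ‖M k‖ ≤ 2 * B := norm_map_sq_div_sq_add_sq_le
    (fun r hr => (hexp r hr).trans (Real.exp_le_one_iff.2 (neg_nonpos.2 hr))) hinv w
  have hk : ‖M k‖ ≤ D := by linarith [hD]
  have hh : ‖1 - M k‖ ≤ D := (norm_sub_le _ _).trans (by rw [norm_one]; linarith)
  have hsum : s + w ^ 2 • s = v ^ 2 * ((1 - k) ^ 3 - 3 • ((1 - k) ^ 2 * k)) +
      ((1 - k) ^ 2 * k - 3 • ((1 - k) * k ^ 2)) := by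
    ext i
    have : y i ≠ 0 := (hy i).ne'
    simp only [hs, v, k, Pi.add_apply, Pi.smul_apply, Pi.mul_apply, Pi.pow_apply, Pi.sub_apply,
      Pi.one_apply, smul_eq_mul]
    simp only [nsmul_eq_mul, Nat.cast_ofNat]
    field_simp
    ring
  have hnorm : ‖M (s + w ^ 2 • s)‖ ≤ 8 * D ^ 3 := by
    rw [hsum]
    simp only [map_add, map_mul, map_sub, map_pow, map_one, map_nsmul]
    have hpow : ∀ {a : 𝒜} {c : ℝ}, ‖a‖ ≤ c → ∀ n : ℕ, ‖a ^ n‖ ≤ c ^ n := fun h n =>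
      (norm_pow_le _ n).trans (pow_le_pow_left₀ (norm_nonneg _) h n)
    have hhhk : ‖(1 - M k) ^ 2 * M k‖ ≤ D ^ 2 * D := norm_mul_le_of_le (hpow hh 2) hk
    have hhkk : ‖(1 - M k) * M k ^ 2‖ ≤ D * D ^ 2 := norm_mul_le_of_le hh (hpow hk 2)
    calc _ ≤ 1 ^ 2 * (D ^ 3 + 3 * (D ^ 2 * D)) + (D ^ 2 * D + 3 * (D * D ^ 2)) := by
          refine norm_add_le_of_le (norm_mul_le_of_le (hpow hv 2)
            (norm_sub_le_of_le (hpow hh 3) ?_)) (norm_sub_le_of_le hhhk ?_) <;>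
          refine norm_nsmul_le.trans ?_ <;>
          push_cast <;>
          gcongr
      _ = 8 * D ^ 3 := by ring
  have hfactor : s + w ^ 2 • s = (1 + w ^ 2) • s := by rw [add_smul, one_smul]
  rw [hfactor, map_smul, norm_smul, Real.norm_of_nonneg (by positivity)] at hnorm
  rw [← div_eq_mul_inv, le_div_iff₀' (by positivity)]
  exact hnorm

lemma norm_map_mul_exp_neg_le [NormOneClass 𝒜] {B : ℝ} (hy : ∀ i, 0 < y i)
    (hexp : ∀ r, 0 ≤ r → ‖M fun i => Real.exp (-(r * y i))‖ ≤ Real.exp (-r))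
    (hinv : ∀ r, 0 ≤ r → ‖M fun i => (1 + Real.exp (-(r * y i)))⁻¹‖ ≤ B) :
    ‖M fun i => y i * Real.exp (-y i)‖ ≤ 16 * (1 + 2 * B) ^ 3 := by
  have hint : ‖M fun i => ∫ w : ℝ,
      Real.cos w * ((y i ^ 4 - 3 * y i ^ 2 * w ^ 2) / (y i ^ 2 + w ^ 2) ^ 3)‖ ≤
      8 * (1 + 2 * B) ^ 3 * π := by
    rw [← integral_univ_inv_one_add_sq, ← integral_const_mul]
    refine norm_map_integral_le M.toLinearMap (fun i => ?_)
      (integrable_inv_one_add_sq.const_mul _) (ae_of_all _ fun w => ?_)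
    · exact integrable_cos_mul_fourier_symbol (hy i)
    · change ‖M (Real.cos w • fun i => (y i ^ 4 - 3 * y i ^ 2 * w ^ 2) / (y i ^ 2 + w ^ 2) ^ 3)‖ ≤ _
      rw [map_smul, norm_smul]
      exact (mul_le_of_le_one_left (norm_nonneg _) (Real.abs_cos_le_one w)).trans
        (norm_map_fourier_symbol_le hy hexp hinv w)
  have hsmul : (fun i => y i * Real.exp (-y i)) = (2 / π) • fun i => ∫ w : ℝ,
      Real.cos w * ((y i ^ 4 - 3 * y i ^ 2 * w ^ 2) / (y i ^ 2 + w ^ 2) ^ 3) :=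
    funext fun i => mul_exp_neg_eq_integral (hy i)
  rw [hsmul, map_smul, norm_smul, Real.norm_of_nonneg (by positivity)]
  calc 2 / π * _ ≤ 2 / π * (8 * (1 + 2 * B) ^ 3 * π) := by gcongr
    _ = 16 * (1 + 2 * B) ^ 3 := by field_simp; ring

/-- The resolvent bound makes the semigroup `e^{-tk}` analytic, with derivative of order `1 / t`. -/
lemma norm_map_mul_exp_neg_mul_le [NormOneClass 𝒜] {B : ℝ} {k : ι → ℝ} (hk : ∀ i, 0 ≤ k i)
    (hexp : ∀ t, 0 ≤ t → ‖M fun i => Real.exp (-(t * k i))‖ ≤ 1)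
    (hinv : ∀ t, 0 ≤ t → ∀ r ∈ Icc (0 : ℝ) 1, ‖M fun i => (1 + r * Real.exp (-(t * k i)))⁻¹‖ ≤ B)
    {t : ℝ} (ht : 0 < t) :
    ‖M fun i => k i * Real.exp (-(t * k i))‖ ≤ (16 * Real.exp 1 * (1 + 2 * B) ^ 3 + 1) / t := by
  let y : ι → ℝ := fun i => t * k i + 1
  have hy : ∀ i, 0 < y i := fun i => add_pos_of_nonneg_of_pos (mul_nonneg ht.le (hk i)) one_pos
  have hshift : ∀ r i, Real.exp (-(r * y i)) = Real.exp (-r) * Real.exp (-(r * t * k i)) :=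
    fun r i => by rw [← Real.exp_add]; simp only [y]; ring_nf
  have hyexp : ∀ r, 0 ≤ r → ‖M fun i => Real.exp (-(r * y i))‖ ≤ Real.exp (-r) := by
    intro r hr
    simp only [hshift]
    change ‖M (Real.exp (-r) • fun i => Real.exp (-(r * t * k i)))‖ ≤ _
    rw [map_smul, norm_smul, Real.norm_of_nonneg (Real.exp_pos _).le]
    exact mul_le_of_le_one_right (Real.exp_pos _).le (hexp _ (by positivity))
  have hyinv : ∀ r, 0 ≤ r → ‖M fun i => (1 + Real.exp (-(r * y i)))⁻¹‖ ≤ B := by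
    intro r hr
    simp only [hshift]
    exact hinv (r * t) (by positivity) _
      ⟨(Real.exp_pos _).le, Real.exp_le_one_iff.2 (neg_nonpos.2 hr)⟩
  have hsplit : t • (fun i => k i * Real.exp (-(t * k i))) =
      Real.exp 1 • (fun i => y i * Real.exp (-y i)) - fun i => Real.exp (-(t * k i)) := by
    ext i
    have hexp_y : Real.exp (-(t * k i)) = Real.exp 1 * Real.exp (-y i) := by
      rw [← Real.exp_add]; simp only [y]; ring_nf
    simp only [Pi.smul_apply, Pi.sub_apply, smul_eq_mul, hexp_y, y]
    ring
  rw [le_div_iff₀' ht]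
  calc t * ‖M fun i => k i * Real.exp (-(t * k i))‖
      = ‖M (t • fun i => k i * Real.exp (-(t * k i)))‖ := by
        rw [map_smul, norm_smul, Real.norm_of_nonneg ht.le]
    _ = ‖Real.exp 1 • M (fun i => y i * Real.exp (-y i)) - M fun i => Real.exp (-(t * k i))‖ := by
        rw [hsplit, map_sub, map_smul]
    _ ≤ Real.exp 1 * (16 * (1 + 2 * B) ^ 3) + 1 := by
        refine norm_sub_le_of_le ?_ (hexp t ht.le)
        rw [norm_smul, Real.norm_of_nonneg (Real.exp_pos _).le]
        gcongr
        exact norm_map_mul_exp_neg_le hy hyexp hyinv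
    _ = 16 * Real.exp 1 * (1 + 2 * B) ^ 3 + 1 := by ring

end SemigroupBounds

section LevelOne

open scoped Real Nat

/-- The Taylor series of `sin (π (k - 1)) / (π (k - 1))`. -/
lemma hasSum_sinc_pi_mul_sub_one (k : ℕ) :
    HasSum (fun j : ℕ => (-1) ^ j * π ^ (2 * j) / (2 * j + 1)! * ((k : ℝ) - 1) ^ (2 * j))
      (if k = 1 then 1 else 0) := by
  split_ifs with hk
  · subst hk
    convert! hasSum_single (f := fun j : ℕ =>
      (-1) ^ j * π ^ (2 * j) / (2 * j + 1)! * (((1 : ℕ) : ℝ) - 1) ^ (2 * j)) 0 ?_ using 1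
    · simp
    · intro j hj
      simp [hj]
  · have hk1 : (k : ℝ) - 1 ≠ 0 := sub_ne_zero.2 (mod_cast hk)
    have hsin : Real.sin (π * ((k : ℝ) - 1)) = 0 := by
      rw [mul_comm]
      exact_mod_cast Real.sin_int_mul_pi ((k : ℤ) - 1)
    have hsum := (Real.hasSum_sin (π * ((k : ℝ) - 1))).mul_left (1 / (π * ((k : ℝ) - 1)))
    rw [hsin, mul_zero] at hsum
    refine hsum.congr_fun fun j => ?_
    rw [pow_succ (π * ((k : ℝ) - 1)), mul_pow]
    field_simp

lemma pi_pow_div_factorial_mul_le (n : ℕ) :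
    π ^ n / (n + 1)! * (n / (2 * π * Real.exp 1) + 1) ^ n ≤
      Real.exp (2 * π * Real.exp 1) * (1 / 2) ^ n := by
  set c := 2 * π * Real.exp 1 with hc
  have hc0 : 0 < c := by positivity
  have hfact : (n ! : ℝ) ≤ (n + 1)! := mod_cast Nat.factorial_le n.le_succ
  calc π ^ n / (n + 1)! * (n / c + 1) ^ n
      ≤ π ^ n / n ! * (n / c + 1) ^ n := by gcongr
    _ = (π / c) ^ n * ((n + c) ^ n / n !) := by
        rw [div_add_one hc0.ne', div_pow, div_pow]
        ring
    _ ≤ (π / c) ^ n * Real.exp (n + c) := by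
        gcongr
        exact Real.pow_div_factorial_le_exp _ (by positivity) n
    _ = Real.exp c * (π / c * Real.exp 1) ^ n := by
        rw [Real.exp_add, ← Real.exp_one_pow, mul_pow]
        ring
    _ = Real.exp c * (1 / 2) ^ n := by
        rw [hc]
        field_simp

lemma hasSum_sub_one_pow_mul_exp_neg {ι : Type*} (a : ℝ) (k : ι → ℕ) :
    HasSum (fun j : ℕ => (Real.exp a * ((-1) ^ j * π ^ (2 * j) / (2 * j + 1)!)) •
        fun i => ((k i : ℝ) - 1) ^ (2 * j) * Real.exp (-(a * k i)))
      fun i => if k i = 1 then 1 else 0 := by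
  refine Pi.hasSum.2 fun i => ?_
  convert! (hasSum_sinc_pi_mul_sub_one (k i)).mul_left
    (Real.exp a * Real.exp (-(a * k i))) using 1
  · ext j
    simp only [Pi.smul_apply, smul_eq_mul]
    ring
  · split_ifs with hk
    · simp [hk, ← Real.exp_add]
    · simp

variable {ι : Type*} {𝒜 : Type*} [NormedRing 𝒜] [NormedAlgebra ℝ 𝒜] [NormOneClass 𝒜]
  {M : (ι → ℝ) →ₐ[ℝ] 𝒜}

/-- Each of the `n` factors `(k - 1) e^{-(a/n) k}` is bounded by the semigroup at time `a / n`. -/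
lemma norm_map_sub_one_pow_mul_exp_neg_le {C a : ℝ} {k : ι → ℝ}
    (hexp : ∀ t, 0 ≤ t → ‖M fun i => Real.exp (-(t * k i))‖ ≤ 1)
    (hderiv : ∀ t, 0 < t → ‖M fun i => k i * Real.exp (-(t * k i))‖ ≤ C / t)
    (ha : 0 < a) (n : ℕ) :
    ‖M fun i => (k i - 1) ^ n * Real.exp (-(a * k i))‖ ≤ (n * C / a + 1) ^ n := by
  rcases n.eq_zero_or_pos with rfl | hn
  · simpa using hexp a ha.le
  have : (0 : ℝ) < n := mod_cast hn
  have hpow : (fun i => (k i - 1) ^ n * Real.exp (-(a * k i))) =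
      ((fun i => k i * Real.exp (-(a / n * k i))) - fun i => Real.exp (-(a / n * k i))) ^ n := by
    ext i
    have hexp_pow : Real.exp (-(a * k i)) = Real.exp (-(a / n * k i)) ^ n := by
      rw [← Real.exp_nat_mul]
      congr 1
      field_simp
    rw [Pi.pow_apply, Pi.sub_apply, hexp_pow, ← mul_pow]
    ring
  rw [hpow, map_pow, map_sub]
  refine (norm_pow_le _ n).trans (pow_le_pow_left₀ (norm_nonneg _) ?_ n)
  refine norm_sub_le_of_le ((hderiv _ (by positivity)).trans_eq ?_) (hexp _ (by positivity))
  field_simp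

lemma norm_map_eq_one_indicator_le [Finite ι] {C : ℝ} (hC : 0 < C) {k : ι → ℕ}
    (hexp : ∀ t, 0 ≤ t → ‖M fun i => Real.exp (-(t * k i))‖ ≤ 1)
    (hderiv : ∀ t, 0 < t → ‖M fun i => k i * Real.exp (-(t * k i))‖ ≤ C / t) :
    ‖M fun i => if k i = 1 then 1 else 0‖ ≤ 4 / 3 * Real.exp (2 * π * Real.exp 1 * (C + 1)) := by
  have := Fintype.ofFinite ι
  set c := 2 * π * Real.exp 1
  have hc0 : 0 < c := by positivity
  have hpow (n : ℕ) :
      ‖M fun i => ((k i : ℝ) - 1) ^ n * Real.exp (-(c * C * k i))‖ ≤ (n / c + 1) ^ n := by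
    convert! norm_map_sub_one_pow_mul_exp_neg_le hexp hderiv (a := c * C) (by positivity) n using 2
    field_simp
  have hgeom : HasSum (fun j : ℕ => Real.exp (c * (C + 1)) * (1 / 2 : ℝ) ^ (2 * j))
      (4 / 3 * Real.exp (c * (C + 1))) := by
    convert! (hasSum_geometric_of_lt_one (r := (1 / 2 : ℝ) ^ 2) (by norm_num)
      (by norm_num)).mul_left (Real.exp (c * (C + 1))) using 1
    · simp only [pow_mul]
    · norm_num
      ring
  refine ((hasSum_sub_one_pow_mul_exp_neg (c * C) k).mapL
    (LinearMap.toContinuousLinearMap M.toLinearMap)).norm_le_of_bounded hgeom fun j => ?_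
  change ‖M (_ • _)‖ ≤ _
  have hcoeff : ‖Real.exp (c * C) * ((-1) ^ j * π ^ (2 * j) / (2 * j + 1)!)‖ =
      Real.exp (c * C) * (π ^ (2 * j) / (2 * j + 1)!) := by
    simp [abs_of_pos Real.pi_pos]
  rw [map_smul, norm_smul, hcoeff]
  calc Real.exp (c * C) * (π ^ (2 * j) / (2 * j + 1)!) * _
      ≤ Real.exp (c * C) * (π ^ (2 * j) / (2 * j + 1)!) * ((2 * j : ℕ) / c + 1) ^ (2 * j) := by
        gcongr
        exact hpow (2 * j)
    _ ≤ Real.exp (c * C) * (Real.exp c * (1 / 2) ^ (2 * j)) := by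
        rw [mul_assoc]
        gcongr Real.exp (c * C) * ?_
        exact pi_pow_div_factorial_mul_le (2 * j)
    _ = Real.exp (c * (C + 1)) * (1 / 2) ^ (2 * j) := by
        rw [← mul_assoc, ← Real.exp_add, mul_add_one]

end LevelOne

section InverseBound

/-- Geometric sum: `2 ^ K - (1 - u) ^ K` is a multiple of `2 - (1 - u) = 1 + u`. -/
lemma norm_le_of_one_add_mul_eq_one {𝒜 : Type*} [NormedRing 𝒜] [NormedAlgebra ℝ 𝒜]
    [NormOneClass 𝒜] {u v : 𝒜} (huv : (1 + u) * v = 1) (hu : ‖u‖ ≤ 1) {K : ℕ} {δ : ℝ} (hδ : 0 < δ)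
    (hpow : ‖(1 - u) ^ K‖ ≤ 2 ^ K - δ) : ‖v‖ ≤ K * 2 ^ (K - 1) / δ := by
  set G := ∑ i ∈ range K, (2 : 𝒜) ^ i * (1 - u) ^ (K - 1 - i)
  have htwo : ‖(2 : 𝒜)‖ ≤ 2 := by
    rw [← one_add_one_eq_two]
    exact (norm_add_le _ _).trans (by rw [norm_one]; norm_num)
  have hsub : ‖1 - u‖ ≤ 2 := (norm_sub_le _ _).trans (by rw [norm_one]; linarith)
  have hG : ‖G‖ ≤ K * 2 ^ (K - 1) := by
    refine (norm_sum_le_of_le _ fun i hi => ?_).trans_eq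
      (by rw [sum_const, card_range, nsmul_eq_mul])
    calc ‖(2 : 𝒜) ^ i * (1 - u) ^ (K - 1 - i)‖
        ≤ ‖(2 : 𝒜)‖ ^ i * ‖1 - u‖ ^ (K - 1 - i) :=
          norm_mul_le_of_le (norm_pow_le _ _) (norm_pow_le _ _)
      _ ≤ 2 ^ i * 2 ^ (K - 1 - i) := by gcongr
      _ = 2 ^ (K - 1) := by
        rw [← pow_add, Nat.add_sub_cancel' (Nat.le_sub_one_of_lt (mem_range.1 hi))]
  have hgeom : G * (1 + u) = 2 ^ K - (1 - u) ^ K := by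
    rw [← (Commute.ofNat_left 2 (1 - u)).geom_sum₂_mul K]
    congr 1
    rw [← one_add_one_eq_two]
    abel
  have hv : (2 : ℝ) ^ K • v = (1 - u) ^ K * v + G := by
    calc (2 : ℝ) ^ K • v = 2 ^ K * v := by rw [Algebra.smul_def, map_pow, map_ofNat]
      _ = (1 - u) ^ K * v + G * ((1 + u) * v) := by rw [← mul_assoc, hgeom]; noncomm_ring
      _ = (1 - u) ^ K * v + G := by rw [huv, mul_one]
  have hnorm := norm_add_le_of_le (norm_mul_le_of_le hpow (le_refl ‖v‖)) hG
  rw [← hv, norm_smul, Real.norm_of_nonneg (by positivity)] at hnorm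
  rw [le_div_iff₀ hδ]
  linarith

end InverseBound

section BConvexity

/-- Quantitative B-convexity: the Rademacher average of any `K` vectors improves by the factor `θ`
on the estimate `‖∑ ± xᵢ‖² ≤ K ∑ ‖xᵢ‖²`. It is stated with squares so as to pass to `ℓ²`-sums. -/
def BConvexWith (X : Type*) [NormedAddCommGroup X] [NormedSpace ℝ X] (K : ℕ) (θ : ℝ) : Prop :=
  ∀ x : Fin K → X, ∑ ε : Fin K → Bool, ‖∑ i, rademacher i ε • x i‖ ^ 2 ≤
    2 ^ K * (θ * (K * ∑ i, ‖x i‖ ^ 2))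

namespace BConvexWith

variable {X : Type*} [NormedAddCommGroup X] [NormedSpace ℝ X] {K : ℕ} {θ : ℝ}

lemma piLp (hX : BConvexWith X K θ) (κ : Type*) [Fintype κ] :
    BConvexWith (PiLp 2 fun _ : κ => X) K θ := by
  intro x
  simp only [PiLp.norm_sq_eq_of_L2, WithLp.ofLp_sum, WithLp.ofLp_smul, Finset.sum_apply,
    Pi.smul_apply]
  rw [sum_comm, sum_comm (s := (univ : Finset (Fin K)))]
  simp only [mul_sum]
  refine sum_le_sum fun b _ => ?_
  simpa only [mul_sum] using hX fun i => x i b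

lemma exists_norm_sum_le (hX : BConvexWith X K θ) (hθ : 0 ≤ θ) {x : Fin K → X} {c : ℝ}
    (hc : 0 ≤ c) (hx : ∀ i, ‖x i‖ ≤ c) :
    ∃ ε : Fin K → Bool, ‖∑ i, rademacher i ε • x i‖ ≤ K * ((1 + θ) / 2 * c) := by
  by_contra! hlt
  have hsq : ∀ ε : Fin K → Bool, θ * (K * c) ^ 2 < ‖∑ i, rademacher i ε • x i‖ ^ 2 := by
    intro ε
    calc θ * (K * c) ^ 2 ≤ ((1 + θ) / 2) ^ 2 * (K * c) ^ 2 := by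
          gcongr
          linarith [sq_nonneg ((1 - θ) / 2)]
      _ = (K * ((1 + θ) / 2 * c)) ^ 2 := by ring
      _ < _ := by gcongr; exact hlt ε
  have hsum := sum_lt_sum_of_nonempty univ_nonempty fun ε _ => hsq ε
  refine (hsum.trans_le (hX x)).not_ge ?_
  calc 2 ^ K * (θ * (K * ∑ i, ‖x i‖ ^ 2)) ≤ 2 ^ K * (θ * (K * ∑ _i : Fin K, c ^ 2)) := by
        gcongr with i
        exact hx i
    _ = ∑ _ε : Fin K → Bool, θ * (K * c) ^ 2 := by
        simp only [sum_const, card_univ, Fintype.card_pi, Fintype.card_bool, prod_const,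
          Fintype.card_fin, nsmul_eq_mul, Nat.cast_pow, Nat.cast_ofNat]
        ring

end BConvexWith

section ContractiveIdempotents

variable {A 𝒜 : Type*} [CommRing A] [Algebra ℝ A] [NormedRing 𝒜] [NormedAlgebra ℝ 𝒜]

lemma exists_norm_map_one_sub_pow_mul_le {M : A →ₐ[ℝ] 𝒜} {S : Set A} {φ : A}
    (hφ : φ ∈ convexHull ℝ S) (K : ℕ) (a : A) :
    ∃ e : Fin K → A, (∀ j, e j ∈ S) ∧ ‖M ((1 - φ) ^ K * a)‖ ≤ ‖M ((∏ j, (1 - e j)) * a)‖ := by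
  induction K generalizing a with
  | zero => exact ⟨Fin.elim0, fun j => j.elim0, by simp⟩
  | succ K ih =>
    obtain ⟨e, he, hle⟩ := ih ((1 - φ) * a)
    set q := (∏ j, (1 - e j)) * a with hq
    obtain ⟨e₀, he₀, hle₀⟩ := ((convexOn_dist (M q) convex_univ).comp_linearMap
      (M.toLinearMap ∘ₗ LinearMap.mulRight ℝ q)).exists_ge_of_mem_convexHull (Set.subset_univ _) hφ
    have hdist (x : A) : dist (M (x * q)) (M q) = ‖M ((1 - x) * q)‖ := by
      rw [dist_comm, dist_eq_norm, ← map_sub, sub_mul, one_mul]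
    refine ⟨Fin.cons e₀ e, Fin.cases he₀ he, ?_⟩
    calc ‖M ((1 - φ) ^ (K + 1) * a)‖ = ‖M ((1 - φ) ^ K * ((1 - φ) * a))‖ := by
          rw [pow_succ, mul_assoc]
      _ ≤ ‖M ((∏ j, (1 - e j)) * ((1 - φ) * a))‖ := hle
      _ = dist (M (φ * q)) (M q) := by rw [hdist, hq, mul_left_comm]
      _ ≤ dist (M (e₀ * q)) (M q) := hle₀
      _ = _ := by rw [hdist, hq, Fin.prod_univ_succ, Fin.cons_zero, mul_assoc]; simp

lemma mul_mem_convexHull_submonoid (S : Submonoid A) {a b : A} (ha : a ∈ convexHull ℝ (S : Set A))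
    (hb : b ∈ convexHull ℝ (S : Set A)) : a * b ∈ convexHull ℝ (S : Set A) := by
  set H := convexHull ℝ (S : Set A)
  have hH : Convex ℝ H := convex_convexHull ℝ _
  have hsub : (S : Set A) ⊆ H := subset_convexHull ℝ _
  have hright {e : A} (he : e ∈ S) : a * e ∈ H :=
    convexHull_min (t := LinearMap.mulRight ℝ e ⁻¹' H) (fun _ hc => hsub (S.mul_mem hc he))
      (hH.linear_preimage _) ha
  exact convexHull_min (t := LinearMap.mulLeft ℝ a ⁻¹' H) (fun _ he => hright he)
    (hH.linear_preimage _) hb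

lemma prod_mem_convexHull_submonoid (S : Submonoid A) {κ : Type*} (s : Finset κ) {a : κ → A}
    (ha : ∀ i ∈ s, a i ∈ convexHull ℝ (S : Set A)) : ∏ i ∈ s, a i ∈ convexHull ℝ (S : Set A) :=
  prod_induction _ (· ∈ convexHull ℝ (S : Set A)) (fun _ _ => mul_mem_convexHull_submonoid S)
    (subset_convexHull ℝ _ S.one_mem) ha

variable [NormOneClass 𝒜]

/-- The idempotents of the commutative algebra `A` which a representation `M` maps into the closed
unit ball. For the Walsh multipliers these include the averages over subcubes. -/
def contractiveIdempotents (M : A →ₐ[ℝ] 𝒜) : Submonoid A where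
  carrier := {e | IsIdempotentElem e ∧ ‖M e‖ ≤ 1}
  one_mem' := ⟨.one, by simp⟩
  mul_mem' ha hb := ⟨ha.1.mul hb.1, by
    rw [map_mul]; exact (norm_mul_le_of_le ha.2 hb.2).trans_eq (one_mul 1)⟩

lemma norm_map_le_one_of_mem_convexHull {M : A →ₐ[ℝ] 𝒜} {φ : A}
    (hφ : φ ∈ convexHull ℝ (contractiveIdempotents M : Set A)) : ‖M φ‖ ≤ 1 := by
  obtain ⟨e, he, hle⟩ := ((convexOn_norm convex_univ).comp_linearMap
    M.toLinearMap).exists_ge_of_mem_convexHull (Set.subset_univ _) hφ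
  exact hle.trans he.2

lemma smul_prod_mem_convexHull {M : A →ₐ[ℝ] 𝒜} {κ : Type*} [Fintype κ] {e : κ → A}
    (he : ∀ i, e i ∈ contractiveIdempotents M) {r s : ℝ} (hr : r ∈ Set.Icc 0 1)
    (hs : s ∈ Set.Icc 0 1) :
    r • ∏ i, (s • 1 + (1 - s) • e i) ∈ convexHull ℝ (contractiveIdempotents M : Set A) := by
  have hzero : (0 : A) ∈ contractiveIdempotents M := ⟨.zero, by simp⟩
  refine (convex_convexHull ℝ _).smul_mem_of_zero_mem (subset_convexHull ℝ _ hzero)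
    (prod_mem_convexHull_submonoid _ _ fun i _ => ?_) hr
  exact convex_convexHull ℝ _ (subset_convexHull ℝ _ (one_mem _)) (subset_convexHull ℝ _ (he i))
    hs.1 (sub_nonneg.2 hs.2) (add_sub_cancel s 1)

end ContractiveIdempotents

variable {Y A : Type*} [NormedAddCommGroup Y] [NormedSpace ℝ Y] [CommRing A] [Algebra ℝ A]

lemma neg_one_pow_card_mul_prod_insert {K : ℕ} {e : Fin K → A} (he : ∀ j, IsIdempotentElem (e j))
    (ε : Fin K → Bool) (j : Fin K) :
    letI U : Finset (Fin K) := {i | ε i}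
    (-1) ^ #(insert j U) * ∏ i ∈ insert j U, e i =
      rademacher j ε • ((-1) ^ #U * ∏ i ∈ U, e i) * e j := by
  by_cases hj : ε j
  · have hmem : j ∈ ({i | ε i} : Finset (Fin K)) := by simp [hj]
    rw [insert_eq_of_mem hmem, ← mul_prod_erase _ _ hmem, rademacher, if_pos hj, one_smul]
    linear_combination -((-1) ^ #{i | ε i} * ∏ i ∈ ({i | ε i} : Finset (Fin K)).erase j, e i) *
      (he j).eq
  · have hmem : j ∉ ({i | ε i} : Finset (Fin K)) := by simp [hj]
    rw [card_insert_of_notMem hmem, prod_insert hmem, rademacher, if_neg hj, neg_smul, one_smul]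
    ring

/-- Choosing the signs `ε` for the vectors `M (e j) x` and `U = {j | ε j}`, the `K` terms
`(-1) ^ #S • M (∏ i ∈ S, e i) x` with `S = insert j U` have a sum of norm less than `K ‖x‖`. -/
lemma norm_map_prod_one_sub_le [Nontrivial Y] {K : ℕ} {θ : ℝ} (hY : BConvexWith Y K θ)
    (hK : 1 ≤ K) (hθ : 0 ≤ θ) (M : A →ₐ[ℝ] (Y →L[ℝ] Y)) {e : Fin K → A}
    (he : ∀ j, e j ∈ contractiveIdempotents M) :
    ‖M (∏ j, (1 - e j))‖ ≤ 2 ^ K - (1 - θ) / 2 := by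
  set w : Finset (Fin K) → A := fun S => (-1) ^ #S * ∏ i ∈ S, e i with hw
  have hMw (S) (x : Y) : ‖M (w S) x‖ ≤ ‖x‖ := by
    refine (ContinuousLinearMap.le_opNorm _ _).trans (mul_le_of_le_one_left (norm_nonneg x) ?_)
    have hS := (prod_mem fun j (_ : j ∈ S) => he j).2
    rcases neg_one_pow_eq_or A #S with h | h <;>
      simpa only [hw, h, one_mul, neg_one_mul, map_neg, norm_neg] using hS
  have hprod : ∏ j, (1 - e j) = ∑ S, w S := by
    simp only [sub_eq_add_neg, prod_one_add, prod_neg, powerset_univ, hw]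
  have htwo : (1 : ℝ) ≤ 2 ^ K := one_le_pow₀ one_le_two
  refine ContinuousLinearMap.opNorm_le_bound _ (by linarith) fun x => ?_
  obtain ⟨ε, hε⟩ := hY.exists_norm_sum_le hθ (norm_nonneg x) fun j =>
    (ContinuousLinearMap.le_opNorm (M (e j)) x).trans
      (mul_le_of_le_one_left (norm_nonneg x) (he j).2)
  set U : Finset (Fin K) := {i | ε i}
  have hinsert (j) : w (insert j U) = rademacher j ε • w U * e j :=
    neg_one_pow_card_mul_prod_insert (fun j => (he j).1) ε j
  have hsplit (j) : M (∏ j, (1 - e j)) x = M (w U) (rademacher j ε • M (e j) x) +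
      ∑ S ∈ univ.erase (insert j U), M (w S) x := by
    rw [hprod, map_sum, _root_.sum_apply, ← add_sum_erase _ _ (mem_univ (insert j U)),
      hinsert, map_mul, map_smul, map_smul]
    rfl
  have hmul : (K : ℝ) • M (∏ j, (1 - e j)) x = M (w U) (∑ j, rademacher j ε • M (e j) x) +
      ∑ j, ∑ S ∈ univ.erase (insert j U), M (w S) x := by
    rw [map_sum, ← sum_add_distrib, ← sum_congr rfl fun j _ => hsplit j]
    simp [Nat.cast_smul_eq_nsmul]
  have hrest (j) : ‖∑ S ∈ univ.erase (insert j U), M (w S) x‖ ≤ (2 ^ K - 1) * ‖x‖ := by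
    refine (norm_sum_le_of_le _ fun S _ => hMw S x).trans_eq ?_
    simp [card_erase_of_mem]
  have hnorm := norm_add_le_of_le ((hMw U _).trans hε) (norm_sum_le_of_le univ fun j _ => hrest j)
  rw [← hmul, norm_smul, RCLike.norm_natCast, sum_const, card_univ, Fintype.card_fin,
    nsmul_eq_mul, ← mul_add] at hnorm
  have := le_of_mul_le_mul_left hnorm (Nat.cast_pos.2 hK)
  linarith

theorem norm_map_le_of_one_add_mul_eq_one [Nontrivial Y] {K : ℕ} {θ : ℝ} (hY : BConvexWith Y K θ)
    (hK : 1 ≤ K) (hθ : 0 ≤ θ) (hθ' : θ < 1) (M : A →ₐ[ℝ] (Y →L[ℝ] Y)) {φ ψ : A}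
    (hφ : φ ∈ convexHull ℝ (contractiveIdempotents M : Set A)) (hφψ : (1 + φ) * ψ = 1) :
    ‖M ψ‖ ≤ K * 2 ^ (K - 1) / ((1 - θ) / 2) := by
  refine norm_le_of_one_add_mul_eq_one (u := M φ) ?_ (norm_map_le_one_of_mem_convexHull hφ)
    (half_pos (sub_pos.2 hθ')) ?_
  · simpa using congrArg M hφψ
  · obtain ⟨e, he, hle⟩ := exists_norm_map_one_sub_pow_mul_le (M := M) hφ K 1
    rw [mul_one, mul_one, map_pow, map_sub, map_one] at hle
    exact hle.trans (norm_map_prod_one_sub_le hY hK hθ M he)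

end BConvexity

section Cube

variable {m : ℕ}

/-- The Walsh functions, that is, the characters of the discrete cube. -/
def walsh (B : Finset (Fin m)) (σ : Fin m → Bool) : ℝ := ∏ i ∈ B, rademacher i σ

/-- The permutation of the discrete cube which negates the `i`-th coordinate. -/
def cubeFlip (i : Fin m) : Equiv.Perm (Fin m → Bool) :=
  Function.Involutive.toPerm (fun σ => Function.update σ i !σ i) fun σ => by simp

@[simp]
lemma cubeFlip_apply (i : Fin m) (σ : Fin m → Bool) :
    cubeFlip i σ = Function.update σ i !σ i := rfl

lemma rademacher_mul_self (i : Fin m) (σ : Fin m → Bool) :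
    rademacher i σ * rademacher i σ = 1 := by
  rw [rademacher]; split_ifs <;> norm_num

lemma rademacher_mul_of_ne {i : Fin m} {σ τ : Fin m → Bool} (h : σ i ≠ τ i) :
    rademacher i σ * rademacher i τ = -1 := by
  rw [rademacher, rademacher]
  cases hσ : σ i <;> cases hτ : τ i <;> simp_all

lemma rademacher_cubeFlip (i j : Fin m) (σ : Fin m → Bool) :
    rademacher j (cubeFlip i σ) = (if j = i then -1 else 1) * rademacher j σ := by
  rcases eq_or_ne j i with rfl | h
  · cases hσ : σ j <;> simp [rademacher, hσ]
  · simp [rademacher, h]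

lemma walsh_cubeFlip (i : Fin m) (B : Finset (Fin m)) (σ : Fin m → Bool) :
    walsh B (cubeFlip i σ) = (if i ∈ B then -1 else 1) * walsh B σ := by
  simp only [walsh, rademacher_cubeFlip, prod_mul_distrib, prod_ite_eq']

lemma walsh_mul_self (B : Finset (Fin m)) (σ : Fin m → Bool) : walsh B σ * walsh B σ = 1 := by
  rw [walsh, ← prod_mul_distrib]
  exact prod_eq_one fun i _ => rademacher_mul_self i σ

lemma sum_walsh_mul_walsh (A B : Finset (Fin m)) :
    ∑ σ, walsh A σ * walsh B σ = if A = B then 2 ^ m else 0 := by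
  split_ifs with h
  · simp [h, walsh_mul_self]
  · obtain ⟨i, hi⟩ : ∃ i, ¬(i ∈ A ↔ i ∈ B) := by
      simpa only [Finset.ext_iff, not_forall] using h
    have hflip : ∑ σ, walsh A σ * walsh B σ = -∑ σ, walsh A σ * walsh B σ := by
      rw [← sum_neg_distrib, ← Equiv.sum_comp (cubeFlip i)]
      refine sum_congr rfl fun σ _ => ?_
      rw [walsh_cubeFlip, walsh_cubeFlip]
      by_cases hA : i ∈ A <;> by_cases hB : i ∈ B <;> simp_all
    linarith

lemma sum_finset_walsh_mul_walsh (σ τ : Fin m → Bool) :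
    ∑ B, walsh B σ * walsh B τ = if σ = τ then 2 ^ m else 0 := by
  simp only [walsh, ← prod_mul_distrib, ← powerset_univ, ← prod_one_add]
  split_ifs with h
  · simp only [h, rademacher_mul_self, one_add_one_eq_two, prod_const, card_univ,
      Fintype.card_fin]
  · obtain ⟨i, hi⟩ := Function.ne_iff.1 h
    exact prod_eq_zero (mem_univ i) (by rw [rademacher_mul_of_ne hi, add_neg_cancel])

end Cube

section WalshMultiplier

variable (X : Type*) [NormedAddCommGroup X] [NormedSpace ℝ X] (m : ℕ)

/-- The space `L²({-1,1}ᵐ; X)`, with respect to the counting measure. -/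
abbrev CubeL2 : Type _ := PiLp 2 fun _ : Fin m → Bool => X

variable {m}

/-- The projection `f ↦ w_B 𝔼[w_B f]` of `L²({-1,1}ᵐ; X)` onto the multiples of the Walsh
function `w_B`. -/
noncomputable def walshProj (B : Finset (Fin m)) : CubeL2 X m →L[ℝ] CubeL2 X m :=
  (PiLp.continuousLinearEquiv 2 ℝ fun _ => X).symm.toContinuousLinearMap ∘L .pi fun σ =>
    walsh B σ • (2 ^ m : ℝ)⁻¹ • ∑ τ, walsh B τ • PiLp.proj 2 (fun _ => X) τ

variable {X}

lemma walshProj_apply (B : Finset (Fin m)) (f : CubeL2 X m) (σ : Fin m → Bool) :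
    walshProj X B f σ = walsh B σ • (2 ^ m : ℝ)⁻¹ • ∑ τ, walsh B τ • f τ := by
  simp [walshProj]

lemma walshProj_mul_walshProj (A B : Finset (Fin m)) :
    walshProj X A * walshProj X B = if A = B then walshProj X A else 0 := by
  ext f σ
  have horth : ∑ τ, walsh A τ • walshProj X B f τ =
      (if A = B then (1 : ℝ) else 0) • ∑ τ, walsh B τ • f τ := by
    simp only [walshProj_apply, smul_smul, ← sum_smul, ← sum_mul, ← mul_assoc, sum_walsh_mul_walsh]
    split_ifs <;> simp
  rw [mul_apply_eq_comp, walshProj_apply, horth]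
  split_ifs with h
  · rw [h, one_smul, walshProj_apply]
  · simp

lemma sum_walshProj : ∑ B : Finset (Fin m), walshProj X B = 1 := by
  ext f σ
  simp only [_root_.sum_apply, WithLp.ofLp_sum, Finset.sum_apply, walshProj_apply, smul_sum,
    smul_smul]
  rw [sum_comm]
  simp only [← sum_smul, mul_left_comm (walsh _ σ), ← mul_sum, sum_finset_walsh_mul_walsh]
  simp

variable (X m)

/-- The multiplier `f ↦ ∑_B φ(B) w_B 𝔼[w_B f]` of the Walsh expansion, as a representation of the
algebra of symbols `φ`. -/
noncomputable def walshMultiplier :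
    (Finset (Fin m) → ℝ) →ₐ[ℝ] (CubeL2 X m →L[ℝ] CubeL2 X m) :=
  AlgHom.ofLinearMap (Fintype.linearCombination ℝ (walshProj X))
    (by simp [Fintype.linearCombination_apply, sum_walshProj])
    fun φ ψ => by
      simp only [Fintype.linearCombination_apply, sum_mul_sum, smul_mul_smul_comm,
        walshProj_mul_walshProj, smul_ite, smul_zero, sum_ite_eq, mem_univ, if_true, Pi.mul_apply]

variable {X m}

lemma walshMultiplier_apply_apply (φ : Finset (Fin m) → ℝ) (f : CubeL2 X m) (σ : Fin m → Bool) :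
    walshMultiplier X m φ f σ =
      ∑ B, (φ B * walsh B σ) • (2 ^ m : ℝ)⁻¹ • ∑ τ, walsh B τ • f τ := by
  simp [walshMultiplier, Fintype.linearCombination_apply, walshProj_apply, mul_smul]

lemma walshMultiplier_card_eq_one_apply (f : CubeL2 X m) (σ : Fin m → Bool) :
    walshMultiplier X m (fun B => if #B = 1 then 1 else 0) f σ =
      ∑ k, rademacher k σ • (2 ^ m : ℝ)⁻¹ • ∑ τ, rademacher k τ • f τ := by
  simp only [walshMultiplier_apply_apply, ite_mul, one_mul, zero_mul, ite_smul, zero_smul,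
    ← sum_filter, univ_filter_card_eq, powersetCard_one, sum_map]
  simp [walsh]

lemma walshMultiplier_sign_apply (i : Fin m) (f : CubeL2 X m) (σ : Fin m → Bool) :
    walshMultiplier X m (fun B => if i ∈ B then -1 else 1) f σ = f (cubeFlip i σ) := by
  calc walshMultiplier X m (fun B => if i ∈ B then -1 else 1) f σ
      = walshMultiplier X m 1 f (cubeFlip i σ) := by
        simp only [walshMultiplier_apply_apply, walsh_cubeFlip, Pi.one_apply, one_mul]
    _ = f (cubeFlip i σ) := by rw [map_one, one_apply_eq_self]

lemma norm_walshMultiplier_sign_le (i : Fin m) :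
    ‖walshMultiplier X m fun B => if i ∈ B then -1 else 1‖ ≤ 1 := by
  let T := LinearIsometryEquiv.piLpCongrLeft 2 ℝ X (cubeFlip i).symm
  have hflip : walshMultiplier X m (fun B => if i ∈ B then -1 else 1) =
      T.toLinearIsometry.toContinuousLinearMap := by
    ext f σ
    exact walshMultiplier_sign_apply i f σ
  exact hflip ▸ LinearIsometry.norm_toContinuousLinearMap_le _

variable [Nontrivial X]

lemma indicator_notMem_mem_contractiveIdempotents (i : Fin m) :
    (fun B => if i ∈ B then 0 else 1) ∈ contractiveIdempotents (walshMultiplier X m) := by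
  refine ⟨funext fun B => by by_cases h : i ∈ B <;> simp [h], ?_⟩
  have havg : (fun B : Finset (Fin m) => if i ∈ B then (0 : ℝ) else 1) =
      (2 : ℝ)⁻¹ • (1 + fun B => if i ∈ B then -1 else 1) := by
    ext B
    by_cases h : i ∈ B <;> norm_num [h]
  rw [havg, map_smul, map_add, map_one, norm_smul]
  have := norm_add_le_of_le (norm_one (α := CubeL2 X m →L[ℝ] CubeL2 X m)).le
    (norm_walshMultiplier_sign_le (X := X) i)
  norm_num
  linarith

lemma mul_exp_neg_mul_card_mem_convexHull {r t : ℝ} (hr : r ∈ Set.Icc 0 1) (ht : 0 ≤ t) :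
    (fun B => r * Real.exp (-(t * #B))) ∈
      convexHull ℝ (contractiveIdempotents (walshMultiplier X m) : Set (Finset (Fin m) → ℝ)) := by
  convert! smul_prod_mem_convexHull (M := walshMultiplier X m)
    indicator_notMem_mem_contractiveIdempotents hr
    (s := Real.exp (-t)) ⟨(Real.exp_pos _).le, Real.exp_le_one_iff.2 (neg_nonpos.2 ht)⟩ using 1
  ext B
  calc r * Real.exp (-(t * #B)) = r * ∏ i, if i ∈ B then Real.exp (-t) else 1 := by
        rw [prod_ite_mem, univ_inter, prod_const, ← Real.exp_nat_mul]
        ring_nf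
    _ = _ := by
        rw [Pi.smul_apply, prod_apply, smul_eq_mul]
        congr! with i
        by_cases h : i ∈ B <;> simp [h]

end WalshMultiplier

section KConvexity

variable {X : Type*} [NormedAddCommGroup X] [NormedSpace ℝ X]

lemma kConvex_of_norm_walshMultiplier_le {C : ℝ}
    (hC : ∀ m, ‖walshMultiplier X m fun B => if #B = 1 then 1 else 0‖ ≤ C) : KConvex X := by
  refine ⟨C, fun m _ f => ?_⟩
  have hle := ContinuousLinearMap.le_of_opNorm_le _ (hC m) (WithLp.toLp 2 f)
  simp only [PiLp.norm_eq_of_L2, walshMultiplier_card_eq_one_apply] at hle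
  rw [Real.sqrt_mul (by positivity), Real.sqrt_mul (by positivity), mul_left_comm]
  gcongr

theorem BConvexWith.kConvex {K : ℕ} {θ : ℝ} (hX : BConvexWith X K θ) (hK : 1 ≤ K) (hθ : 0 ≤ θ)
    (hθ' : θ < 1) : KConvex X := by
  cases subsingleton_or_nontrivial X with
  | inl _ => exact ⟨0, fun n _ f => by simp [Subsingleton.elim _ (0 : X)]⟩
  | inr _ =>
    set B : ℝ := K * 2 ^ (K - 1) / ((1 - θ) / 2)
    have : 0 ≤ B := div_nonneg (by positivity) (half_pos (sub_pos.2 hθ')).le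
    refine kConvex_of_norm_walshMultiplier_le (C := 4 / 3 * Real.exp (2 * Real.pi * Real.exp 1 *
      (16 * Real.exp 1 * (1 + 2 * B) ^ 3 + 1 + 1))) fun m => ?_
    have hexp (t : ℝ) (ht : 0 ≤ t) : ‖walshMultiplier X m fun S => Real.exp (-(t * #S))‖ ≤ 1 := by
      simpa using norm_map_le_one_of_mem_convexHull
        (mul_exp_neg_mul_card_mem_convexHull (X := X) (m := m) (r := 1) (by simp) ht)
    have hinv (t : ℝ) (ht : 0 ≤ t) (r : ℝ) (hr : r ∈ Set.Icc 0 1) :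
        ‖walshMultiplier X m fun S => (1 + r * Real.exp (-(t * #S)))⁻¹‖ ≤ B := by
      refine norm_map_le_of_one_add_mul_eq_one (hX.piLp _) hK hθ hθ' _
        (mul_exp_neg_mul_card_mem_convexHull hr ht) (funext fun S => mul_inv_cancel₀ ?_)
      exact (add_pos_of_pos_of_nonneg one_pos (mul_nonneg hr.1 (Real.exp_pos _).le)).ne'
    exact norm_map_eq_one_indicator_le (by positivity) hexp fun t ht =>
      norm_map_mul_exp_neg_mul_le (fun _ => Nat.cast_nonneg _) hexp hinv ht

end KConvexity

section EllOne

variable {X : Type*} [NormedAddCommGroup X] [NormedSpace ℝ X] {n : ℕ}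

lemma abs_rademacher (k : Fin n) (σ : Fin n → Bool) : |rademacher k σ| = 1 := by
  rw [rademacher]; split_ifs <;> simp

lemma norm_sum_rademacher_smul_le (x : Fin n → X) (ε : Fin n → Bool) :
    ‖∑ i, rademacher i ε • x i‖ ≤ ∑ i, ‖x i‖ :=
  norm_sum_le_of_le _ fun i _ => by rw [norm_smul, Real.norm_eq_abs, abs_rademacher, one_mul]

lemma exists_eq_abs_mul_rademacher (a : Fin n → ℝ) :
    ∃ ε : Fin n → Bool, ∀ i, a i = |a i| * rademacher i ε := by
  refine ⟨fun i => decide (0 ≤ a i), fun i => ?_⟩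
  by_cases h : 0 ≤ a i
  · simp [rademacher, h, abs_of_nonneg h]
  · simp [rademacher, h, abs_of_neg (not_le.1 h)]

/-- With `a i = |a i| ε i`, the vector `c ∑ ε i x i` exceeds `∑ a i x i` by
`∑ (c - |a i|) ε i x i`, whose norm is at most `∑ (c - |a i|) ‖x i‖`. -/
lemma sum_abs_mul_norm_sub_le_norm_sum {x : Fin n → X} {ω : ℝ}
    (hx : ∀ ε : Fin n → Bool, ∑ i, ‖x i‖ - ω ≤ ‖∑ i, rademacher i ε • x i‖)
    {a : Fin n → ℝ} {c : ℝ} (hc : 0 ≤ c) (ha : ∀ i, |a i| ≤ c) :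
    ∑ i, |a i| * ‖x i‖ - ω * c ≤ ‖∑ i, a i • x i‖ := by
  obtain ⟨ε, hε⟩ := exists_eq_abs_mul_rademacher a
  have hsplit : c • ∑ i, rademacher i ε • x i =
      ∑ i, a i • x i + ∑ i, ((c - |a i|) * rademacher i ε) • x i := by
    rw [← sum_add_distrib, smul_sum]
    refine sum_congr rfl fun i _ => ?_
    rw [← add_smul, smul_smul, sub_mul, ← hε, add_sub_cancel]
  have hrest : ‖∑ i, ((c - |a i|) * rademacher i ε) • x i‖ ≤ ∑ i, (c - |a i|) * ‖x i‖ :=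
    norm_sum_le_of_le _ fun i _ => by
      rw [norm_smul, norm_mul, Real.norm_eq_abs (rademacher i ε), abs_rademacher, mul_one,
        Real.norm_of_nonneg (sub_nonneg.2 (ha i))]
  have hnorm := norm_add_le (∑ i, a i • x i) (∑ i, ((c - |a i|) * rademacher i ε) • x i)
  rw [← hsplit, norm_smul, Real.norm_of_nonneg hc] at hnorm
  have hlow := mul_le_mul_of_nonneg_left (hx ε) hc
  have hsum : ∑ i, (c - |a i|) * ‖x i‖ = c * ∑ i, ‖x i‖ - ∑ i, |a i| * ‖x i‖ := by
    simp only [sub_mul, sum_sub_distrib, mul_sum]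
  linarith

lemma exists_l1n_of_sum_norm_sub_le {x : Fin n → X} {ω ρ : ℝ} (hρ : 0 < ρ)
    (hx : ∀ ε : Fin n → Bool, ∑ i, ‖x i‖ - ω ≤ ‖∑ i, rademacher i ε • x i‖)
    (hρx : ∀ i, ρ ≤ ‖x i‖) :
    ∃ y : Fin n → X, ∀ a : Fin n → ℝ,
      (1 - ω / ρ) * ∑ i, |a i| ≤ ‖∑ i, a i • y i‖ ∧ ‖∑ i, a i • y i‖ ≤ ∑ i, |a i| := by
  have hpos (i) : 0 < ‖x i‖ := hρ.trans_le (hρx i)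
  refine ⟨fun i => ‖x i‖⁻¹ • x i, fun a => ⟨?_, norm_sum_le_of_le _ fun i _ => ?_⟩⟩
  · have hlow := sum_abs_mul_norm_sub_le_norm_sum hx (a := fun i => a i * ‖x i‖⁻¹)
      (c := (∑ i, |a i|) / ρ) (by positivity) fun i => ?_
    · have habs (i) : |a i * ‖x i‖⁻¹| * ‖x i‖ = |a i| := by
        rw [abs_mul, abs_inv, abs_norm, inv_mul_cancel_right₀ (hpos i).ne']
      simp only [habs] at hlow
      simp only [smul_smul]
      refine le_of_eq_of_le ?_ hlow
      ring
    · rw [abs_mul, abs_inv, abs_norm, ← div_eq_mul_inv]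
      gcongr
      · exact single_le_sum (f := fun i => |a i|) (fun i _ => abs_nonneg _) (mem_univ i)
      · exact hρx i
  · rw [smul_smul, norm_smul, norm_mul, norm_inv, norm_norm, inv_mul_cancel_right₀ (hpos i).ne',
      Real.norm_eq_abs]

/-- `∑ (n r i - ∑ r) ^ 2 = n (n ∑ r ^ 2 - (∑ r) ^ 2)` is small. -/
lemma sum_div_le_of_mul_sum_sq_le {r : Fin n → ℝ} {η : ℝ} (hr : ∀ i, 0 ≤ r i)
    (hη : 8 * (n * η) ≤ 1)
    (hle : (1 - η) * (n * ∑ i, r i ^ 2) ≤ (∑ i, r i) ^ 2) (i : Fin n) :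
    (∑ i, r i) / (2 * n) ≤ r i := by
  have hn : (1 : ℝ) ≤ n := by exact_mod_cast i.pos
  set R := ∑ i, r i
  set Q := ∑ i, r i ^ 2
  have hR : 0 ≤ R := sum_nonneg fun i _ => hr i
  have hvar : ∑ j, (n * r j - R) ^ 2 = n * (n * Q - R ^ 2) := by
    have hsq (j) : (n * r j - R) ^ 2 = n ^ 2 * r j ^ 2 - 2 * n * R * r j + R ^ 2 := by ring
    simp only [hsq, sum_add_distrib, sum_sub_distrib, ← mul_sum, sum_const, card_univ,
      Fintype.card_fin, nsmul_eq_mul]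
    ring
  have hterm : (n * r i - R) ^ 2 ≤ n * (n * Q - R ^ 2) :=
    hvar ▸ single_le_sum (f := fun j => (n * r j - R) ^ 2) (fun _ _ => sq_nonneg _) (mem_univ i)
  have hsmall : n * (n * Q - R ^ 2) ≤ (R / 2) ^ 2 := by
    have hQ : 0 ≤ n * Q := mul_nonneg (by positivity) (sum_nonneg fun _ _ => sq_nonneg _)
    have : η ≤ 1 / 8 := by nlinarith
    calc n * (n * Q - R ^ 2) ≤ n * (η * (n * Q)) := by gcongr; linarith
      _ ≤ 1 / 8 * (n * Q) := by rw [← mul_assoc]; gcongr; linarith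
      _ ≤ (R / 2) ^ 2 := by nlinarith
  have := abs_le_of_sq_le_sq' (hterm.trans hsmall) (by positivity)
  rw [div_le_iff₀ (by positivity)]
  linarith

lemma lt_norm_sum_rademacher_sq {x : Fin n → X} {η : ℝ}
    (hx : 2 ^ n * ((1 - η / 2 ^ n) * (n * ∑ i, ‖x i‖ ^ 2)) <
      ∑ ε : Fin n → Bool, ‖∑ i, rademacher i ε • x i‖ ^ 2) (ε : Fin n → Bool) :
    (1 - η) * (n * ∑ i, ‖x i‖ ^ 2) < ‖∑ i, rademacher i ε • x i‖ ^ 2 := by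
  set Q := n * ∑ i, ‖x i‖ ^ 2
  have hcs (τ : Fin n → Bool) : ‖∑ i, rademacher i τ • x i‖ ^ 2 ≤ Q := by
    calc ‖∑ i, rademacher i τ • x i‖ ^ 2 ≤ (∑ i, ‖x i‖) ^ 2 := by
          gcongr; exact norm_sum_rademacher_smul_le x τ
      _ ≤ Q := by simpa using sq_sum_le_card_mul_sum_sq (s := univ) (f := fun i => ‖x i‖)
  have hrest := sum_le_card_nsmul (univ.erase ε) _ _ fun τ _ => hcs τ
  rw [← add_sum_erase _ _ (mem_univ ε)] at hx
  rw [card_erase_of_mem (mem_univ ε), card_univ, Fintype.card_pi, nsmul_eq_mul] at hrest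
  have hcard : ((∏ _i : Fin n, Fintype.card Bool - 1 : ℕ) : ℝ) = 2 ^ n - 1 := by simp
  have hpow : (2 : ℝ) ^ n * ((1 - η / 2 ^ n) * Q) = (1 - η) * Q + (2 ^ n - 1) * Q := by
    field_simp
    ring
  rw [hcard] at hrest
  linarith

lemma exists_l1n_of_not_bConvexWith (hn : 1 ≤ n) {η : ℝ} (hη : 0 < η) (hnη : 8 * (n * η) ≤ 1)
    (hX : ¬BConvexWith X n (1 - η / 2 ^ n)) :
    ∃ y : Fin n → X, ∀ a : Fin n → ℝ,
      (1 - 2 * (n * η)) * ∑ i, |a i| ≤ ‖∑ i, a i • y i‖ ∧ ‖∑ i, a i • y i‖ ≤ ∑ i, |a i| := by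
  simp only [BConvexWith, not_forall, not_le] at hX
  obtain ⟨x, hx⟩ := hX
  have hn' : (1 : ℝ) ≤ n := by exact_mod_cast hn
  have hη' : 0 ≤ 1 - η := by nlinarith
  set R := ∑ i, ‖x i‖
  set Q := n * ∑ i, ‖x i‖ ^ 2
  have hRQ : R ^ 2 ≤ Q := by simpa using sq_sum_le_card_mul_sum_sq (s := univ) (f := fun i => ‖x i‖)
  have hQ (ε : Fin n → Bool) : (1 - η) * Q < ‖∑ i, rademacher i ε • x i‖ ^ 2 :=
    lt_norm_sum_rademacher_sq hx ε
  have hQR : (1 - η) * Q < R ^ 2 := (hQ fun _ => true).trans_le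
    (pow_le_pow_left₀ (norm_nonneg _) (norm_sum_rademacher_smul_le x _) 2)
  have hR0 : 0 < R := (sum_nonneg fun _ _ => norm_nonneg _).lt_of_ne' fun (h : R = 0) => by
    rw [h] at hQR hRQ
    nlinarith
  have hxR (ε : Fin n → Bool) : R - η * R ≤ ‖∑ i, rademacher i ε • x i‖ := by
    refine le_of_sq_le_sq ?_ (norm_nonneg _)
    calc (R - η * R) ^ 2 = (1 - η) * ((1 - η) * R ^ 2) := by ring
      _ ≤ 1 * ((1 - η) * Q) := by gcongr; linarith
      _ ≤ _ := by rw [one_mul]; exact (hQ ε).le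
  convert! exists_l1n_of_sum_norm_sub_le (ρ := R / (2 * n))
    (by positivity) hxR (sum_div_le_of_mul_sum_sq_le (fun _ => norm_nonneg _) hnη hQR.le) using 7
  field_simp

theorem exists_bConvexWith_of_not_containsL1nUniformly (hX : ¬ContainsL1nUniformly X) :
    ∃ (n : ℕ) (θ : ℝ), 1 ≤ n ∧ 0 ≤ θ ∧ θ < 1 ∧ BConvexWith X n θ := by
  simp only [ContainsL1nUniformly, not_forall] at hX
  obtain ⟨n, hn, l, hl, hX⟩ := hX
  have hn' : (1 : ℝ) ≤ n := by exact_mod_cast hn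
  set η := (1 - l⁻¹) / (8 * n) with hη
  have hl' : 0 < 1 - l⁻¹ := sub_pos.2 (inv_lt_one_of_one_lt₀ hl)
  have hη0 : 0 < η := by positivity
  have hnη : 8 * (n * η) = 1 - l⁻¹ := by rw [hη]; field_simp
  refine ⟨n, 1 - η / 2 ^ n, hn, ?_, sub_lt_self _ (by positivity), ?_⟩
  · have hη1 : η ≤ 1 := by nlinarith [inv_pos.2 (zero_lt_one.trans hl)]
    exact sub_nonneg.2 (div_le_one_of_le₀ (hη1.trans (one_le_pow₀ one_le_two)) (by positivity))
  · by_contra hb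
    obtain ⟨y, hy⟩ := exists_l1n_of_not_bConvexWith hn hη0
      (hnη.trans_le (sub_le_self _ (inv_pos.2 (zero_lt_one.trans hl)).le)) hb
    refine hX ⟨y, fun a => ⟨(mul_le_mul_of_nonneg_right ?_ ?_).trans (hy a).1, (hy a).2⟩⟩
    · linarith
    · positivity

end EllOne

section Khintchine

lemma sum_cube_succ {n : ℕ} (F : (Fin (n + 1) → Bool) → ℝ) :
    ∑ σ, F σ = ∑ τ : Fin n → Bool, (F (Fin.cons true τ) + F (Fin.cons false τ)) := by
  rw [← (Fin.consEquiv fun _ : Fin (n + 1) => Bool).sum_comp, Fintype.sum_prod_type,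
    Fintype.sum_bool, ← sum_add_distrib]
  rfl

lemma sum_mul_rademacher_cons {n : ℕ} (a : Fin (n + 1) → ℝ) (b : Bool) (τ : Fin n → Bool) :
    ∑ k, a k * rademacher k (Fin.cons b τ : Fin (n + 1) → Bool) =
      (if b then a 0 else -a 0) + ∑ k, a k.succ * rademacher k τ := by
  rw [Fin.sum_univ_succ]
  cases b <;> simp [rademacher]

lemma sum_sq_sum_mul_rademacher {n : ℕ} (a : Fin n → ℝ) :
    ∑ τ : Fin n → Bool, (∑ k, a k * rademacher k τ) ^ 2 = 2 ^ n * ∑ k, a k ^ 2 := by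
  induction n with
  | zero => simp
  | succ n ih =>
    have hsq (y : ℝ) : (a 0 + y) ^ 2 + (-a 0 + y) ^ 2 = 2 * y ^ 2 + 2 * a 0 ^ 2 := by ring
    simp only [sum_cube_succ, sum_mul_rademacher_cons, if_true, Bool.false_eq_true, if_false, hsq,
      sum_add_distrib, ← mul_sum, ih fun k => a k.succ, Fin.sum_univ_succ (fun k => a k ^ 2)]
    simp only [sum_const, card_univ, Fintype.card_pi_const, Fintype.card_bool, nsmul_eq_mul]
    push_cast
    ring

lemma sum_pow_four_sum_mul_rademacher_le {n : ℕ} (a : Fin n → ℝ) :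
    ∑ τ : Fin n → Bool, (∑ k, a k * rademacher k τ) ^ 4 ≤ 2 ^ n * (3 * (∑ k, a k ^ 2) ^ 2) := by
  induction n with
  | zero => simp
  | succ n ih =>
    have hpow (y : ℝ) : (a 0 + y) ^ 4 + (-a 0 + y) ^ 4 =
        2 * y ^ 4 + 12 * a 0 ^ 2 * y ^ 2 + 2 * a 0 ^ 4 := by ring
    simp only [sum_cube_succ, sum_mul_rademacher_cons, if_true, Bool.false_eq_true, if_false, hpow,
      sum_add_distrib, ← mul_sum, sum_sq_sum_mul_rademacher, Fin.sum_univ_succ (fun k => a k ^ 2)]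
    simp only [sum_const, card_univ, Fintype.card_pi_const, Fintype.card_bool, nsmul_eq_mul]
    push_cast
    set S := ∑ k, a (Fin.succ k) ^ 2
    have hle : 2 ^ n * (4 * a 0 ^ 4) ≥ 0 := by positivity
    linear_combination 2 * ih (fun k => a k.succ) + hle

/-- The first moment is controlled by the second and the fourth through the pointwise inequality
`12 s² u² ≤ u⁴ + 16 s³ |u|`. -/
lemma two_pow_mul_sqrt_sum_sq_le_sum_abs {n : ℕ} (a : Fin n → ℝ) :
    2 ^ n * √(∑ k, a k ^ 2) ≤ 2 * ∑ τ : Fin n → Bool, |∑ k, a k * rademacher k τ| := by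
  set s := √(∑ k, a k ^ 2)
  have hs : 0 ≤ s := Real.sqrt_nonneg _
  have hS : s ^ 2 = ∑ k, a k ^ 2 := Real.sq_sqrt (sum_nonneg fun _ _ => sq_nonneg _)
  have hpoint (u : ℝ) : 12 * s ^ 2 * u ^ 2 ≤ u ^ 4 + 16 * s ^ 3 * |u| := by
    have hfac : 0 ≤ |u| * (|u| - 2 * s) ^ 2 * (|u| + 4 * s) := by positivity
    rw [← sq_abs u, show u ^ 4 = |u| ^ 4 by rw [pow_abs, abs_of_nonneg (by positivity)]]
    linarith
  have hsum := sum_le_sum fun τ (_ : τ ∈ univ) => hpoint (∑ k, a k * rademacher k τ)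
  rw [sum_add_distrib, ← mul_sum, ← mul_sum, sum_sq_sum_mul_rademacher, ← hS] at hsum
  have hfour := sum_pow_four_sum_mul_rademacher_le a
  rw [← hS] at hfour
  rcases hs.eq_or_lt with h | h
  · rw [← h, mul_zero]
    positivity
  · have hnonneg : 0 ≤ 2 ^ n * s ^ 4 := by positivity
    refine le_of_mul_le_mul_left (a := 8 * s ^ 3) ?_ (by positivity)
    linear_combination hsum + hfour + hnonneg

end Khintchine

section NotKConvex

variable {X : Type*} [NormedAddCommGroup X] [NormedSpace ℝ X]

lemma ContainsL1nUniformly.exists_vectors (hX : ContainsL1nUniformly X) (ι : Type*) [Fintype ι]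
    [Nonempty ι] {l : ℝ} (hl : 1 < l) :
    ∃ x : ι → X, ∀ a : ι → ℝ,
      l⁻¹ * ∑ i, |a i| ≤ ‖∑ i, a i • x i‖ ∧ ‖∑ i, a i • x i‖ ≤ ∑ i, |a i| := by
  obtain ⟨x, hx⟩ := hX (Fintype.card ι) Fintype.card_pos l hl
  let e := Fintype.equivFin ι
  refine ⟨x ∘ e, fun a => ?_⟩
  simpa [← e.sum_comp] using hx (a ∘ e.symm)

lemma norm_le_one_of_norm_sum_smul_le {ι : Type*} [Fintype ι] {x : ι → X}
    (hx : ∀ a : ι → ℝ, ‖∑ i, a i • x i‖ ≤ ∑ i, |a i|) (i : ι) : ‖x i‖ ≤ 1 := by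
  classical
  simpa [Pi.single_apply, apply_ite abs, ite_smul] using hx (Pi.single i 1)

/-- Viewing `f` as the tautological function `τ ↦ e_τ` into `ℓ¹` of the cube, the value of its
Rademacher projection at `σ` has coefficients `2⁻ⁿ ∑ₖ rₖ(σ) rₖ(τ)`. -/
lemma sqrt_le_norm_sum_rademacher_smul {n : ℕ} {f : (Fin n → Bool) → X} {c : ℝ} (hc : 0 ≤ c)
    (hf : ∀ a : (Fin n → Bool) → ℝ, c * ∑ τ, |a τ| ≤ ‖∑ τ, a τ • f τ‖) (σ : Fin n → Bool) :
    c / 2 * √n ≤ ‖∑ k, rademacher k σ • ((2 ^ n : ℝ)⁻¹ • ∑ τ, rademacher k τ • f τ)‖ := by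
  have hsum : ∑ k, rademacher k σ • ((2 ^ n : ℝ)⁻¹ • ∑ τ, rademacher k τ • f τ) =
      (2 ^ n : ℝ)⁻¹ • ∑ τ, (∑ k, rademacher k σ * rademacher k τ) • f τ := by
    simp only [sum_smul, smul_sum, smul_smul]
    rw [sum_comm]
    exact sum_congr rfl fun τ _ => sum_congr rfl fun k _ => by rw [mul_left_comm]
  have hkh := two_pow_mul_sqrt_sum_sq_le_sum_abs fun k => rademacher k σ
  simp only [sq, rademacher_mul_self, sum_const, card_univ, Fintype.card_fin, nsmul_eq_mul,
    mul_one] at hkh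
  rw [hsum, norm_smul, Real.norm_of_nonneg (by positivity), le_inv_mul_iff₀ (by positivity)]
  refine le_trans ?_ (hf _)
  linear_combination c / 2 * hkh

theorem ContainsL1nUniformly.not_kConvex (hX : ContainsL1nUniformly X) : ¬KConvex X := by
  rintro ⟨C, hC⟩
  obtain ⟨n, hn⟩ := exists_nat_gt ((4 * C) ^ 2)
  have hn0 : 0 < n := by exact_mod_cast (sq_nonneg _).trans_lt hn
  obtain ⟨f, hf⟩ := hX.exists_vectors (Fin n → Bool) one_lt_two
  have hlow : 1 / 4 * √n ≤ √((2 ^ n : ℝ)⁻¹ * ∑ σ : Fin n → Bool,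
      ‖∑ k, rademacher k σ • ((2 ^ n : ℝ)⁻¹ • ∑ τ, rademacher k τ • f τ)‖ ^ 2) := by
    refine Real.le_sqrt_of_sq_le ((le_inv_mul_iff₀ (by positivity)).2 ?_)
    have hle := card_nsmul_le_sum univ _ _ fun σ (_ : σ ∈ univ) => pow_le_pow_left₀ (by positivity)
      (sqrt_le_norm_sum_rademacher_smul (by norm_num) (fun a => (hf a).1) σ) 2
    norm_num at hle ⊢
    exact hle
  have hup : √((2 ^ n : ℝ)⁻¹ * ∑ σ, ‖f σ‖ ^ 2) ≤ 1 := by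
    refine Real.sqrt_le_one.2 ((inv_mul_le_iff₀ (by positivity)).2 ?_)
    have hle := sum_le_card_nsmul univ _ _ fun σ (_ : σ ∈ univ) => pow_le_one₀ (n := 2)
      (norm_nonneg _) (norm_le_one_of_norm_sum_smul_le (fun a => (hf a).2) σ)
    simpa using hle
  have hbound : √n ≤ |4 * C| := by
    have := hlow.trans ((hC n hn0 f).trans
      (mul_le_mul (le_abs_self C) hup (Real.sqrt_nonneg _) (abs_nonneg C)))
    rw [abs_mul, abs_of_pos (four_pos (α := ℝ))]
    linarith
  exact hn.not_ge ((Real.sqrt_le_left (abs_nonneg _)).1 hbound |>.trans_eq (sq_abs _))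

end NotKConvex

theorem kconvex_iff_not_contains_l1n_general {X : Type*} [NormedAddCommGroup X]
    [NormedSpace ℝ X] : KConvex X ↔ ¬ContainsL1nUniformly X := by
  refine ⟨fun hK hX => hX.not_kConvex hK, fun hX => ?_⟩
  obtain ⟨n, θ, hn, hθ, hθ', hB⟩ := exists_bConvexWith_of_not_containsL1nUniformly hX
  exact hB.kConvex hn hθ hθ'

theorem kconvex_iff_not_contains_l1n {X : Type*} [NormedAddCommGroup X] [NormedSpace ℝ X]
    [CompleteSpace X] :
    KConvex X ↔ ¬ ContainsL1nUniformly X :=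
  kconvex_iff_not_contains_l1n_general
end

section
/- Let m ≥ 1 be an integer and let a : Fin m × Fin m → ℝ. The following are equivalent: (1) for every t ≥ 0 and every matrix B ∈ M_m(ℂ), the entrywise (Hadamard–Schur) product of [e^{−t·a(i,j)}]_{i,j} with B satisfies ‖[e^{−t·a(i,j)} B_{ij}]‖ ≤ ‖B‖, where ‖·‖ is the operator norm of a matrix acting on ℓ²(Fin m); (2) there exist a real inner product space H and families (α_i)_{i∈Fin m} and (β_j)_{j∈Fin m} in H such that a(i,j) = ‖α_i − β_j‖²_H for all i, j. -/
open Matrix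

/-- The operator norm of a complex `m × m` matrix acting on `ℓ²(Fin m)`. -/
noncomputable def matrixOpNorm {m : ℕ} (B : Matrix (Fin m) (Fin m) ℂ) : ℝ :=
  ‖(Matrix.toEuclideanCLM (𝕜 := ℂ) (n := Fin m) B :
      EuclideanSpace ℂ (Fin m) →L[ℂ] EuclideanSpace ℂ (Fin m))‖

/-- A representation of `a : Fin m × Fin m → ℝ` as squared distances `‖α_i - β_j‖²` between
two families of points of a real inner product space. -/
structure SqDistInnerRepr {m : ℕ} (a : Fin m × Fin m → ℝ) where
  H : Type
  [normedAddCommGroup : NormedAddCommGroup H]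
  [innerProductSpace : InnerProductSpace ℝ H]
  α : Fin m → H
  β : Fin m → H
  repr : ∀ i j : Fin m, a (i, j) = ‖α i - β j‖ ^ 2

/-!
Scaling the corners of the block matrix `[[1, B], [Bᴴ, 1]]`, which is positive semidefinite exactly
when `‖B‖ ≤ 1`, turns contractivity of a Schur multiplier `M` into preservation of positivity for
all blocks `[[R, X], [Xᴴ, S]]` with `R` and `S` diagonal. If `a (i, j) = ‖α i - β j‖ ^ 2`, then
`M = exp (-t a)` is an off-diagonal corner of a Gaussian kernel, which is positive semidefinite with
unit diagonal, and the Schur product theorem applies. Conversely, the functions `‖α i - β j‖ ^ 2`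
form a closed convex cone. If `a` is outside it, some weight `C` is nonnegative on the cone and
negative at `a`; nonnegativity on the cone says precisely that the bipartite Laplacian with edge
weights `C` is positive semidefinite. Multiplying its corner by `exp (-t a)` and testing on the
all-ones vector gives `∑ C (1 - exp (-t a)) ≥ 0`, whose derivative at `t = 0` is `∑ C a ≥ 0`, a
contradiction.
-/

section SchurMultipliers

open scoped ComplexOrder MatrixOrder Topology Matrix.Norms.L2Operator

section PosSemidef

variable {𝕜 n : Type*} [RCLike 𝕜]

lemma isClosed_setOf_posSemidef : IsClosed {A : Matrix n n 𝕜 | A.PosSemidef} := by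
  simp only [PosSemidef, IsHermitian, Set.ofPred_and, Set.ofPred_forall, Finsupp.sum]
  exact (isClosed_eq (by fun_prop) continuous_id).inter
    (isClosed_iInter fun x => isClosed_le continuous_const (by fun_prop))

lemma posSemidef_of_forall_add_smul_one [DecidableEq n] {A : Matrix n n 𝕜}
    (h : ∀ ε : ℝ, 0 < ε → (A + ε • 1).PosSemidef) : A.PosSemidef := by
  have lim : Filter.Tendsto (fun ε : ℝ => A + ε • (1 : Matrix n n 𝕜)) (𝓝[>] 0) (𝓝 A) := by
    have : Continuous fun ε : ℝ => A + ε • (1 : Matrix n n 𝕜) := by fun_prop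
    simpa using (this.tendsto 0).mono_left nhdsWithin_le_nhds
  exact isClosed_setOf_posSemidef.mem_of_tendsto lim (eventually_mem_nhdsWithin.mono h)

lemma exists_gram_eq_of_posSemidef [Fintype n] {G : Matrix n n 𝕜} (hG : G.PosSemidef) :
    ∃ v : n → EuclideanSpace 𝕜 n, gram 𝕜 v = G := by
  classical
  obtain ⟨A, rfl⟩ := CStarAlgebra.nonneg_iff_eq_star_mul_self.mp hG.nonneg
  refine ⟨fun i => WithLp.toLp 2 fun k => A k i, ?_⟩
  ext i j
  simp [mul_apply, star_apply, PiLp.inner_apply, mul_comm]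

variable [Finite n]

lemma posSemidef_map_pow {A : Matrix n n 𝕜} (hA : A.PosSemidef) (k : ℕ) :
    (A.map (· ^ k)).PosSemidef := by
  induction k with
  | zero =>
    have allOnes : A.map (· ^ 0) = vecMulVec 1 (star 1) := by ext; simp [vecMulVec_apply]
    exact allOnes ▸ posSemidef_vecMulVec_self_star 1
  | succ k ih =>
    have schur : A.map (· ^ (k + 1)) = A.map (· ^ k) ⊙ A := by ext; simp [pow_succ]
    exact schur ▸ ih.hadamard hA

lemma posSemidef_map_exp {A : Matrix n n 𝕜} (hA : A.PosSemidef) :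
    (A.map NormedSpace.exp).PosSemidef := by
  have posSemidef_partialSum (N : ℕ) :
      (∑ k ∈ Finset.range N, (k.factorial : ℝ)⁻¹ • A.map (· ^ k)).PosSemidef :=
    posSemidef_sum _ fun k _ => (posSemidef_map_pow hA k).smul (by positivity)
  have tendsto_partialSum :
      Filter.Tendsto (fun N => ∑ k ∈ Finset.range N, (k.factorial : ℝ)⁻¹ • A.map (· ^ k))
        Filter.atTop (𝓝 (A.map NormedSpace.exp)) := by
    refine tendsto_pi_nhds.2 fun i => tendsto_pi_nhds.2 fun j => ?_
    simpa [Matrix.sum_apply] using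
      (NormedSpace.exp_series_hasSum_exp' (𝕂 := ℝ) (A i j)).tendsto_sum_nat
  exact isClosed_setOf_posSemidef.mem_of_tendsto tendsto_partialSum
    (.of_forall posSemidef_partialSum)

lemma posSemidef_exp_neg_mul_norm_sub_sq {H : Type*} [NormedAddCommGroup H]
    [InnerProductSpace ℝ H] (v : n → H) {t : ℝ} (ht : 0 ≤ t) :
    (Matrix.of fun i j => Real.exp (-t * ‖v i - v j‖ ^ 2)).PosSemidef := by
  let w : n → ℝ := fun i => Real.exp (-t * ‖v i‖ ^ 2)
  have posSemidef_exp_gram : (((2 * t) • gram ℝ v).map NormedSpace.exp).PosSemidef :=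
    posSemidef_map_exp ((posSemidef_gram ℝ v).smul (by positivity))
  have factorization : (Matrix.of fun i j => Real.exp (-t * ‖v i - v j‖ ^ 2)) =
      vecMulVec w (star w) ⊙ ((2 * t) • gram ℝ v).map NormedSpace.exp := by
    ext i j
    simp only [of_apply, hadamard_apply, vecMulVec_apply, star_trivial, map_apply,
      Matrix.smul_apply, gram_apply, smul_eq_mul, w, ← Real.exp_eq_exp_ℝ, ← Real.exp_add,
      norm_sub_sq_real]
    ring_nf
  exact factorization ▸ (posSemidef_vecMulVec_self_star w).hadamard posSemidef_exp_gram

lemma posSemidef_map_ofReal_iff {A : Matrix n n ℝ} :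
    (A.map ((↑) : ℝ → 𝕜)).PosSemidef ↔ A.PosSemidef := by
  cases nonempty_fintype n
  constructor
  · intro hA
    refine .of_dotProduct_mulVec_nonneg (IsHermitian.ext fun i j => ?_) fun x => ?_
    · simpa using hA.isHermitian.apply i j
    · have form_eq : star (fun i => (x i : 𝕜)) ⬝ᵥ A.map ((↑) : ℝ → 𝕜) *ᵥ (fun i => (x i : 𝕜)) =
          ((star x ⬝ᵥ A *ᵥ x : ℝ) : 𝕜) := by
        simp [dotProduct, mulVec]
      exact RCLike.ofReal_nonneg.1 (form_eq ▸ hA.dotProduct_mulVec_nonneg _)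
  · classical
    intro hA
    obtain ⟨C, rfl⟩ := CStarAlgebra.nonneg_iff_eq_star_mul_self.mp hA.nonneg
    have map_star_mul_self : (star C * C).map ((↑) : ℝ → 𝕜) =
        (C.map ((↑) : ℝ → 𝕜))ᴴ * C.map ((↑) : ℝ → 𝕜) := by
      ext i j
      simp [mul_apply, star_apply]
    exact map_star_mul_self ▸ posSemidef_conjTranspose_mul_self _

end PosSemidef

section OperatorNorm

variable {𝕜 ι κ : Type*} [RCLike 𝕜] [Fintype ι] [Fintype κ]

lemma star_dotProduct_self_eq_norm_sq (x : κ → 𝕜) :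
    star x ⬝ᵥ x = ((‖WithLp.toLp 2 x‖ ^ 2 : ℝ) : 𝕜) := by
  rw [dotProduct_comm, ← EuclideanSpace.inner_toLp_toLp, inner_self_eq_norm_sq_to_K]
  norm_cast

variable [DecidableEq κ]

lemma posSemidef_one_sub_conjTranspose_mul_self_iff {B : Matrix ι κ 𝕜} :
    (1 - Bᴴ * B).PosSemidef ↔ ‖B‖ ≤ 1 := by
  have quadratic_form (x : κ → 𝕜) : star x ⬝ᵥ (1 - Bᴴ * B) *ᵥ x =
      ((‖WithLp.toLp 2 x‖ ^ 2 - ‖WithLp.toLp 2 (B *ᵥ x)‖ ^ 2 : ℝ) : 𝕜) := by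
    rw [sub_mulVec, one_mulVec, dotProduct_sub, ← mulVec_mulVec, dotProduct_mulVec,
      ← star_mulVec, RCLike.ofReal_sub, ← star_dotProduct_self_eq_norm_sq,
      ← star_dotProduct_self_eq_norm_sq]
  have isHermitian : (1 - Bᴴ * B).IsHermitian :=
    isHermitian_one.sub (isHermitian_conjTranspose_mul_self B)
  rw [posSemidef_iff_dotProduct_mulVec, l2_opNorm_def,
    ContinuousLinearMap.opNorm_le_iff zero_le_one]
  simp only [quadratic_form, RCLike.ofReal_nonneg, isHermitian, true_and, sub_nonneg,
    sq_le_sq₀ (norm_nonneg _) (norm_nonneg _), one_mul]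
  exact ⟨fun h x => h x.ofLp, fun h x => h (WithLp.toLp 2 x)⟩

lemma posSemidef_fromBlocks_one_iff [DecidableEq ι] {B : Matrix ι κ 𝕜} :
    (fromBlocks 1 B Bᴴ 1).PosSemidef ↔ ‖B‖ ≤ 1 := by
  let : Invertible (1 : Matrix ι ι 𝕜) := invertibleOne
  rw [PosDef.fromBlocks₁₁ B 1 .one, inv_one, Matrix.mul_one,
    posSemidef_one_sub_conjTranspose_mul_self_iff]

lemma posSemidef_fromBlocks_diagonal_sq_iff [DecidableEq ι] {X : Matrix ι κ 𝕜} {p : ι → ℝ}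
    {q : κ → ℝ} (hp : ∀ i, p i ≠ 0) (hq : ∀ j, q j ≠ 0) :
    (fromBlocks (diagonal fun i => (p i : 𝕜) ^ 2) X Xᴴ
      (diagonal fun j => (q j : 𝕜) ^ 2)).PosSemidef ↔
      ‖Matrix.of fun i j => (p i * q j : 𝕜)⁻¹ * X i j‖ ≤ 1 := by
  let Y : Matrix ι κ 𝕜 := Matrix.of fun i j => (p i * q j : 𝕜)⁻¹ * X i j
  let D : Matrix (ι ⊕ κ) (ι ⊕ κ) 𝕜 := diagonal (Sum.elim (fun i => (p i : 𝕜)) fun j => (q j : 𝕜))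
  have isUnit_D : IsUnit D := by
    simp [D, isUnit_diagonal, Pi.isUnit_iff, hp, hq]
  have congruence : fromBlocks (diagonal fun i => (p i : 𝕜) ^ 2) X Xᴴ
      (diagonal fun j => (q j : 𝕜) ^ 2) = star D * fromBlocks 1 Y Yᴴ 1 * D := by
    have p_ne (i) : (p i : 𝕜) ≠ 0 := RCLike.ofReal_ne_zero.2 (hp i)
    have q_ne (j) : (q j : 𝕜) ≠ 0 := RCLike.ofReal_ne_zero.2 (hq j)
    ext (i | i) (j | j)
    · simp +contextual [D, star_eq_conjTranspose, diagonal_apply, one_apply, pow_two]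
    · simp only [fromBlocks_apply₁₂, star_eq_conjTranspose, diagonal_conjTranspose, mul_diagonal,
        diagonal_mul, Pi.star_apply, Sum.elim_inl, RCLike.star_def, RCLike.conj_ofReal, of_apply,
        Sum.elim_inr, D, Y]
      field [p_ne i, q_ne j]
    · simp only [fromBlocks_apply₂₁, conjTranspose_apply, RCLike.star_def, star_eq_conjTranspose,
        diagonal_conjTranspose, mul_diagonal, diagonal_mul, Pi.star_apply, Sum.elim_inr,
        RCLike.conj_ofReal, of_apply, star_mul', star_inv₀, Sum.elim_inl, D, Y]
      field [p_ne j, q_ne i]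
    · simp +contextual [D, star_eq_conjTranspose, diagonal_apply, one_apply, pow_two]
  rw [congruence, isUnit_D.posSemidef_star_left_conjugate_iff, posSemidef_fromBlocks_one_iff]

lemma norm_map_ofReal_le_one_iff {B : Matrix ι κ ℝ} :
    ‖B.map ((↑) : ℝ → 𝕜)‖ ≤ 1 ↔ ‖B‖ ≤ 1 := by
  classical
  have map_block : fromBlocks 1 (B.map ((↑) : ℝ → 𝕜)) (B.map ((↑) : ℝ → 𝕜))ᴴ 1 =
      (fromBlocks 1 B Bᴴ 1).map ((↑) : ℝ → 𝕜) := by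
    rw [fromBlocks_map, Matrix.map_one _ RCLike.ofReal_zero RCLike.ofReal_one,
      Matrix.map_one _ RCLike.ofReal_zero RCLike.ofReal_one, conjTranspose_map _ fun _ => by simp]
  rw [← posSemidef_fromBlocks_one_iff, map_block, posSemidef_map_ofReal_iff,
    posSemidef_fromBlocks_one_iff]

end OperatorNorm

section SchurContraction

variable {𝕜 ι κ : Type*} [RCLike 𝕜] [Fintype ι] [Fintype κ] [DecidableEq κ]

/-- Contractivity of the Schur multiplier `B ↦ M ⊙ B` for the `ℓ²` operator norm. -/
def IsSchurContraction (M : Matrix ι κ 𝕜) : Prop :=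
  ∀ B : Matrix ι κ 𝕜, ‖M ⊙ B‖ ≤ ‖B‖

lemma isSchurContraction_of_unitBall {M : Matrix ι κ 𝕜}
    (h : ∀ B : Matrix ι κ 𝕜, ‖B‖ ≤ 1 → ‖M ⊙ B‖ ≤ 1) : IsSchurContraction M := by
  intro B
  obtain rfl | hB := eq_or_ne B 0
  · simp
  have normalized := h _ (norm_smul_inv_norm (𝕜 := 𝕜) hB).le
  rwa [hadamard_smul, norm_smul, norm_inv, RCLike.norm_ofReal, abs_norm,
    inv_mul_le_one₀ (norm_pos_iff.2 hB)] at normalized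

lemma isSchurContraction_toBlocks₁₂_of_posSemidef {K : Matrix (ι ⊕ κ) (ι ⊕ κ) 𝕜}
    (hK : K.PosSemidef) (diag_eq_one : ∀ x, K x x = 1) : IsSchurContraction K.toBlocks₁₂ := by
  classical
  refine isSchurContraction_of_unitBall fun B hB => ?_
  have schur : fromBlocks 1 (K.toBlocks₁₂ ⊙ B) (K.toBlocks₁₂ ⊙ B)ᴴ 1 =
      K ⊙ fromBlocks 1 B Bᴴ 1 := by
    ext (i | i) (j | j)
    · simp +contextual [one_apply, diag_eq_one]
    · simp [toBlocks₁₂]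
    · simp [toBlocks₁₂, ← hK.isHermitian.apply (Sum.inr i) (Sum.inl j), mul_comm]
    · simp +contextual [one_apply, diag_eq_one]
  rw [← posSemidef_fromBlocks_one_iff, schur]
  exact hK.hadamard (posSemidef_fromBlocks_one_iff.2 hB)

lemma IsSchurContraction.of_map_ofReal {M : Matrix ι κ ℝ}
    (hM : IsSchurContraction (M.map ((↑) : ℝ → 𝕜))) : IsSchurContraction M := by
  refine isSchurContraction_of_unitBall fun B hB => ?_
  have map_hadamard : (M ⊙ B).map ((↑) : ℝ → 𝕜) = M.map (↑) ⊙ B.map (↑) := by ext; simp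
  rw [← norm_map_ofReal_le_one_iff (𝕜 := 𝕜), map_hadamard]
  exact (hM _).trans (norm_map_ofReal_le_one_iff.2 hB)

lemma IsSchurContraction.posSemidef_fromBlocks_diagonal [DecidableEq ι] {M X : Matrix ι κ 𝕜}
    {r : ι → ℝ} {s : κ → ℝ} (hM : IsSchurContraction M)
    (hX : (fromBlocks (diagonal fun i => (r i : 𝕜)) X Xᴴ
      (diagonal fun j => (s j : 𝕜))).PosSemidef) :
    (fromBlocks (diagonal fun i => (r i : 𝕜)) (M ⊙ X) (M ⊙ X)ᴴ
      (diagonal fun j => (s j : 𝕜))).PosSemidef := by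
  -- The perturbation makes the diagonal blocks invertible, so that they can be normalised to `1`.
  refine posSemidef_of_forall_add_smul_one fun ε hε => ?_
  have r_pos (i) : 0 < r i + ε :=
    add_pos_of_nonneg_of_pos (by simpa using hX.diag_nonneg (i := Sum.inl i)) hε
  have s_pos (j) : 0 < s j + ε :=
    add_pos_of_nonneg_of_pos (by simpa using hX.diag_nonneg (i := Sum.inr j)) hε
  have perturb (Y : Matrix ι κ 𝕜) :
      fromBlocks (diagonal fun i => (r i : 𝕜)) Y Yᴴ (diagonal fun j => (s j : 𝕜)) + ε • 1 =
        fromBlocks (diagonal fun i => (√(r i + ε) : 𝕜) ^ 2) Y Yᴴ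
          (diagonal fun j => (√(s j + ε) : 𝕜) ^ 2) := by
    rw [← fromBlocks_one, fromBlocks_smul, fromBlocks_add, ← diagonal_one, ← diagonal_one,
      ← diagonal_smul, ← diagonal_smul, diagonal_add, diagonal_add]
    simp [← RCLike.ofReal_pow, Real.sq_sqrt, (r_pos _).le, (s_pos _).le,
      RCLike.real_smul_eq_coe_mul]
  have hXε := hX.add (PosSemidef.one.smul hε.le)
  rw [perturb, posSemidef_fromBlocks_diagonal_sq_iff (fun i => (Real.sqrt_pos.2 (r_pos i)).ne')
    fun j => (Real.sqrt_pos.2 (s_pos j)).ne'] at hXε ⊢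
  refine le_trans (le_of_eq_of_le (congrArg norm ?_) (hM _)) hXε
  ext i j
  exact mul_left_comm ..

end SchurContraction

section SqDistCone

lemma isClosed_image_of_isBounded_inter_preimage {X Y : Type*} [PseudoMetricSpace X]
    [ProperSpace X] [TopologicalSpace Y] [T2Space Y] [CompactlyCoherentSpace Y] {f : X → Y}
    (hf : Continuous f) {S : Set X} (hS : IsClosed S)
    (hb : ∀ K, IsCompact K → Bornology.IsBounded (S ∩ f ⁻¹' K)) : IsClosed (f '' S) := by
  refine (CompactlyCoherentSpace.isClosed_iff _).2 fun K hK => ?_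
  have isCompact_trace : IsCompact (f '' S ∩ K) := by
    rw [← Set.image_inter_preimage]
    exact (Metric.isCompact_of_isClosed_isBounded (hS.inter (hK.isClosed.preimage hf))
      (hb K hK)).image hf
  rw [← Subtype.preimage_coe_inter_self]
  exact isCompact_trace.isClosed.preimage continuous_subtype_val

variable (ι κ : Type*)

/-- Polarised squared distances: the Gram matrix of a family of points indexed by `ι ⊕ κ` is sent
to the squared distances between its `ι`-part and its `κ`-part. -/
noncomputable def sqDistOfGram : Matrix (ι ⊕ κ) (ι ⊕ κ) ℝ →ₗ[ℝ] (ι × κ → ℝ) where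
  toFun G p := G (.inl p.1) (.inl p.1) + G (.inr p.2) (.inr p.2) - 2 * G (.inl p.1) (.inr p.2)
  map_add' G G' := by ext p; simp only [Matrix.add_apply, Pi.add_apply]; ring
  map_smul' c G := by
    ext p; simp only [Matrix.smul_apply, Pi.smul_apply, smul_eq_mul, RingHom.id_apply]; ring

variable {ι κ} in
lemma sqDistOfGram_gram {H : Type*} [NormedAddCommGroup H] [InnerProductSpace ℝ H]
    (v : ι ⊕ κ → H) (p : ι × κ) :
    sqDistOfGram ι κ (gram ℝ v) p = ‖v (.inl p.1) - v (.inr p.2)‖ ^ 2 := by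
  simp only [sqDistOfGram, LinearMap.coe_mk, AddHom.coe_mk, gram_apply,
    real_inner_self_eq_norm_sq, norm_sub_sq_real]
  ring

variable [Fintype ι] [Fintype κ]

/-- The cone of functions on `ι × κ` of the form `(i, j) ↦ ‖α i - β j‖ ^ 2` with `α` and `β` taking
values in a real inner product space; positive semidefinite matrices are the Gram matrices, so it
is a linear image of the positive semidefinite cone. -/
noncomputable def sqDistCone : PointedCone ℝ (ι × κ → ℝ) :=
  (PointedCone.positive ℝ (Matrix (ι ⊕ κ) (ι ⊕ κ) ℝ)).map (sqDistOfGram ι κ)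

variable {ι κ}

lemma sqDist_mem_sqDistCone {H : Type*} [NormedAddCommGroup H] [InnerProductSpace ℝ H]
    (v : ι ⊕ κ → H) : (fun p => ‖v (.inl p.1) - v (.inr p.2)‖ ^ 2) ∈ sqDistCone ι κ :=
  PointedCone.mem_map.2 ⟨gram ℝ v, (posSemidef_gram ℝ v).nonneg, funext (sqDistOfGram_gram v)⟩

lemma exists_sqDist_eq_of_mem_sqDistCone {a : ι × κ → ℝ} (ha : a ∈ sqDistCone ι κ) :
    ∃ v : ι ⊕ κ → EuclideanSpace ℝ (ι ⊕ κ),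
      (fun p => ‖v (.inl p.1) - v (.inr p.2)‖ ^ 2) = a := by
  obtain ⟨G, hG, rfl⟩ := PointedCone.mem_map.1 ha
  obtain ⟨v, rfl⟩ := exists_gram_eq_of_posSemidef (nonneg_iff_posSemidef.1 hG)
  exact ⟨v, funext fun p => (sqDistOfGram_gram v p).symm⟩

lemma norm_le_two_mul_of_inl_eq_zero {H : Type*} [SeminormedAddCommGroup H] {v : ι ⊕ κ → H} {i₀ : ι}
    {j₀ : κ} {R : ℝ} (pinned : v (.inl i₀) = 0)
    (h : ∀ i j, ‖v (.inl i) - v (.inr j)‖ ≤ R) : ‖v‖ ≤ 2 * R := by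
  have R_nonneg : 0 ≤ R := (norm_nonneg _).trans (h i₀ j₀)
  have norm_inr_le (j) : ‖v (.inr j)‖ ≤ R := by simpa [pinned] using h i₀ j
  refine (pi_norm_le_iff_of_nonneg (by positivity)).2 ?_
  rintro (i | j)
  · linarith [norm_le_norm_sub_add (v (.inl i)) (v (.inr j₀)), h i j₀, norm_inr_le j₀]
  · linarith [norm_inr_le j]

lemma isClosed_sqDistCone : IsClosed (sqDistCone ι κ : Set (ι × κ → ℝ)) := by
  obtain _ | ⟨⟨i₀, j₀⟩⟩ := isEmpty_or_nonempty (ι × κ)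
  · exact isClosed_discrete _
  let E := EuclideanSpace ℝ (ι ⊕ κ)
  let f : (ι ⊕ κ → E) → ι × κ → ℝ := fun v p => ‖v (.inl p.1) - v (.inr p.2)‖ ^ 2
  -- Translating one point to the origin makes the squared-distance map proper.
  let pinned : Set (ι ⊕ κ → E) := {v | v (.inl i₀) = 0}
  have image_pinned : f '' pinned = sqDistCone ι κ := by
    refine Set.Subset.antisymm (Set.image_subset_iff.2 fun v _ => sqDist_mem_sqDistCone v) ?_
    intro a ha
    obtain ⟨v, rfl⟩ := exists_sqDist_eq_of_mem_sqDistCone ha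
    exact ⟨fun x => v x - v (.inl i₀), sub_self _, by simp [f]⟩
  rw [← image_pinned]
  refine isClosed_image_of_isBounded_inter_preimage (by fun_prop)
    (isClosed_eq (by fun_prop) continuous_const) fun K hK => ?_
  obtain ⟨R, hR⟩ := hK.isBounded.exists_norm_le
  refine isBounded_iff_forall_norm_le.2 ⟨2 * √R, fun v hv => ?_⟩
  refine norm_le_two_mul_of_inl_eq_zero (j₀ := j₀) hv.1 fun i j => Real.le_sqrt_of_sq_le ?_
  exact (le_abs_self _).trans ((norm_le_pi_norm (f v) (i, j)).trans (hR _ hv.2))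

lemma exists_forall_mem_sqDistCone_sum_mul_nonneg {a : ι × κ → ℝ} (ha : a ∉ sqDistCone ι κ) :
    ∃ C : Matrix ι κ ℝ, (∀ b ∈ sqDistCone ι κ, 0 ≤ ∑ p : ι × κ, C p.1 p.2 * b p) ∧
      ∑ p : ι × κ, C p.1 p.2 * a p < 0 := by
  classical
  let K : ProperCone ℝ (ι × κ → ℝ) := ⟨sqDistCone ι κ, isClosed_sqDistCone⟩
  obtain ⟨f, nonneg_on_cone, neg_at_a⟩ := K.hyperplane_separation_point ha
  have f_eq_sum (b : ι × κ → ℝ) :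
      f b = ∑ p, f (fun q => if p = q then 1 else 0) * b p := by
    simpa [mul_comm] using f.toLinearMap.pi_apply_eq_sum_univ b
  refine ⟨Matrix.of fun i j => f fun q => if (i, j) = q then 1 else 0, fun b hb => ?_, ?_⟩
  · exact f_eq_sum b ▸ nonneg_on_cone b hb
  · exact f_eq_sum a ▸ neg_at_a

end SqDistCone

section Laplacian

variable {ι κ : Type*} [Fintype ι] [Fintype κ] [DecidableEq ι] [DecidableEq κ]

lemma dotProduct_fromBlocks_diagonal_mulVec {R : Type*} [CommSemiring R] (r : ι → R)
    (X : Matrix ι κ R) (Y : Matrix κ ι R) (s : κ → R) (z : ι ⊕ κ → R) :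
    z ⬝ᵥ fromBlocks (diagonal r) X Y (diagonal s) *ᵥ z =
      ∑ i, r i * z (.inl i) ^ 2 + ∑ i, ∑ j, (X i j + Y j i) * (z (.inl i) * z (.inr j)) +
        ∑ j, s j * z (.inr j) ^ 2 := by
  have lower_left : ∑ j, z (.inr j) * ∑ i, Y j i * z (.inl i) =
      ∑ i, ∑ j, Y j i * (z (.inl i) * z (.inr j)) := by
    simp only [Finset.mul_sum]
    rw [Finset.sum_comm]
    congr! 2; ring
  have upper_right : ∑ i, z (.inl i) * ∑ j, X i j * z (.inr j) =
      ∑ i, ∑ j, X i j * (z (.inl i) * z (.inr j)) := by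
    simp only [Finset.mul_sum]
    congr! 2; ring
  rw [fromBlocks_mulVec]
  simp only [dotProduct, Fintype.sum_sum_type, Sum.elim_inl, Sum.elim_inr, Pi.add_apply,
    mulVec_diagonal, Function.comp_apply, mul_add, add_mul, Finset.sum_add_distrib]
  simp only [mulVec, dotProduct, Function.comp_apply, lower_left, upper_right, pow_two,
    mul_left_comm (z _)]
  ring

/-- The Laplacian of the complete bipartite graph on `ι ⊕ κ` whose edge `{i, j}` has the real,
possibly negative, weight `C i j`. -/
def bipartiteLaplacian (C : Matrix ι κ ℝ) : Matrix (ι ⊕ κ) (ι ⊕ κ) ℝ :=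
  fromBlocks (diagonal fun i => ∑ j, C i j) (-C) (-C)ᴴ (diagonal fun j => ∑ i, C i j)

lemma dotProduct_bipartiteLaplacian_mulVec (C : Matrix ι κ ℝ) (z : ι ⊕ κ → ℝ) :
    z ⬝ᵥ bipartiteLaplacian C *ᵥ z =
      ∑ p : ι × κ, C p.1 p.2 * (z (.inl p.1) - z (.inr p.2)) ^ 2 := by
  rw [bipartiteLaplacian, dotProduct_fromBlocks_diagonal_mulVec]
  simp only [Fintype.sum_prod_type, Finset.sum_mul]
  rw [Finset.sum_comm (s := (Finset.univ : Finset κ)), ← Finset.sum_add_distrib,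
    ← Finset.sum_add_distrib]
  refine Finset.sum_congr rfl fun i _ => ?_
  rw [← Finset.sum_add_distrib, ← Finset.sum_add_distrib]
  refine Finset.sum_congr rfl fun j _ => ?_
  simp only [conjTranspose_apply, Matrix.neg_apply, star_trivial]
  ring

lemma posSemidef_bipartiteLaplacian {C : Matrix ι κ ℝ}
    (hC : ∀ b ∈ sqDistCone ι κ, 0 ≤ ∑ p : ι × κ, C p.1 p.2 * b p) :
    (bipartiteLaplacian C).PosSemidef := by
  refine .of_dotProduct_mulVec_nonneg ?_ fun z => ?_
  · exact isHermitian_fromBlocks_iff.2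
      ⟨isHermitian_diagonal _, rfl, conjTranspose_conjTranspose _, isHermitian_diagonal _⟩
  · rw [star_trivial, dotProduct_bipartiteLaplacian_mulVec]
    simpa using hC _ (sqDist_mem_sqDistCone z)

lemma IsSchurContraction.sum_mul_le_sum {C w : Matrix ι κ ℝ} (hw : IsSchurContraction w)
    (hC : (bipartiteLaplacian C).PosSemidef) :
    ∑ p : ι × κ, C p.1 p.2 * w p.1 p.2 ≤ ∑ p : ι × κ, C p.1 p.2 := by
  have form_at_ones : (1 : ι ⊕ κ → ℝ) ⬝ᵥ fromBlocks (diagonal fun i => ∑ j, C i j) (w ⊙ (-C))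
      (w ⊙ (-C))ᴴ (diagonal fun j => ∑ i, C i j) *ᵥ 1 =
      2 * (∑ p : ι × κ, C p.1 p.2 - ∑ p : ι × κ, C p.1 p.2 * w p.1 p.2) := by
    rw [dotProduct_fromBlocks_diagonal_mulVec]
    simp only [Pi.one_apply, one_pow, mul_one, hadamard_apply, Matrix.neg_apply,
      conjTranspose_apply, star_trivial, ← two_mul, ← Finset.mul_sum, neg_mul,
      Finset.sum_neg_distrib, mul_comm (w _ _), Fintype.sum_prod_type]
    rw [Finset.sum_comm (s := (Finset.univ : Finset κ))]
    ring
  have form_nonneg := (hw.posSemidef_fromBlocks_diagonal hC).dotProduct_mulVec_nonneg 1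
  rw [star_trivial] at form_nonneg
  linarith [form_nonneg.trans_eq form_at_ones]

lemma sum_mul_nonneg_of_forall_sum_mul_exp_le {γ : Type*} [Fintype γ] {c a : γ → ℝ}
    (h : ∀ t, 0 ≤ t → ∑ p, c p * Real.exp (-t * a p) ≤ ∑ p, c p) : 0 ≤ ∑ p, c p * a p := by
  let φ : ℝ → ℝ := fun t => ∑ p, c p * (1 - Real.exp (-t * a p))
  have φ_nonneg (t : ℝ) (ht : 0 ≤ t) : 0 ≤ φ t := by
    simpa [φ, mul_sub] using h t ht
  have hasDerivAt_φ : HasDerivAt φ (∑ p, c p * a p) 0 := by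
    refine HasDerivAt.fun_sum fun p _ => HasDerivAt.const_mul _ ?_
    simpa using ((hasDerivAt_id (0 : ℝ)).neg.mul_const (a p)).exp.const_sub 1
  have tendsto_slope := (hasDerivWithinAt_iff_tendsto_slope' Set.self_notMem_Ioi).1
    (hasDerivAt_φ.hasDerivWithinAt (s := Set.Ioi 0))
  refine ge_of_tendsto tendsto_slope (eventually_mem_nhdsWithin.mono fun t (ht : 0 < t) => ?_)
  have φ_zero : φ 0 = 0 := by simp [φ]
  rw [slope_def_field, φ_zero, sub_zero, sub_zero]
  exact div_nonneg (φ_nonneg t ht.le) ht.le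

end Laplacian

section Characterization

universe u v

variable {ι : Type u} {κ : Type v} [Fintype ι] [Fintype κ] [DecidableEq κ]

lemma isSchurContraction_exp_neg_mul_norm_sub_sq {𝕜 H : Type*} [RCLike 𝕜]
    [NormedAddCommGroup H] [InnerProductSpace ℝ H] (α : ι → H) (β : κ → H) {t : ℝ} (ht : 0 ≤ t) :
    IsSchurContraction (Matrix.of fun i j => (Real.exp (-t * ‖α i - β j‖ ^ 2) : 𝕜)) := by
  let v : ι ⊕ κ → H := Sum.elim α β
  let K : Matrix (ι ⊕ κ) (ι ⊕ κ) ℝ := Matrix.of fun x y => Real.exp (-t * ‖v x - v y‖ ^ 2)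
  have posSemidef_K : (K.map ((↑) : ℝ → 𝕜)).PosSemidef :=
    posSemidef_map_ofReal_iff.2 (posSemidef_exp_neg_mul_norm_sub_sq v ht)
  have toBlocks_K : (Matrix.of fun i j => (Real.exp (-t * ‖α i - β j‖ ^ 2) : 𝕜)) =
      (K.map ((↑) : ℝ → 𝕜)).toBlocks₁₂ := rfl
  rw [toBlocks_K]
  exact isSchurContraction_toBlocks₁₂_of_posSemidef posSemidef_K fun x => by simp [K]

lemma mem_sqDistCone_of_forall_isSchurContraction_exp {a : ι × κ → ℝ}
    (h : ∀ t, 0 ≤ t → IsSchurContraction (Matrix.of fun i j => Real.exp (-t * a (i, j)))) :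
    a ∈ sqDistCone ι κ := by
  classical
  by_contra ha
  obtain ⟨C, nonneg_on_cone, neg_at_a⟩ := exists_forall_mem_sqDistCone_sum_mul_nonneg ha
  have laplacian := posSemidef_bipartiteLaplacian nonneg_on_cone
  exact neg_at_a.not_ge
    (sum_mul_nonneg_of_forall_sum_mul_exp_le fun t ht => (h t ht).sum_mul_le_sum laplacian)

theorem semigroup_contractive_schur_multipliers_iff_finite_general {𝕜 : Type*} [RCLike 𝕜]
    (a : ι × κ → ℝ) :
    (∀ t : ℝ, 0 ≤ t →
        IsSchurContraction (Matrix.of fun i j => (Real.exp (-t * a (i, j)) : 𝕜))) ↔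
      ∃ (H : Type (max u v)) (_ : NormedAddCommGroup H) (_ : InnerProductSpace ℝ H)
        (α : ι → H) (β : κ → H), ∀ i j, a (i, j) = ‖α i - β j‖ ^ 2 := by
  constructor
  · intro h
    obtain ⟨v, rfl⟩ := exists_sqDist_eq_of_mem_sqDistCone
      (mem_sqDistCone_of_forall_isSchurContraction_exp fun t ht => (h t ht).of_map_ofReal)
    exact ⟨_, _, inferInstance, v ∘ .inl, v ∘ .inr, fun _ _ => rfl⟩
  · rintro ⟨H, _, _, α, β, ha⟩ t ht
    simpa only [ha] using isSchurContraction_exp_neg_mul_norm_sub_sq α β ht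

end Characterization

end SchurMultipliers

theorem semigroup_contractive_schur_multipliers_iff_finite {m : ℕ} (hm : 1 ≤ m)
    (a : Fin m × Fin m → ℝ) :
    (∀ t : ℝ, 0 ≤ t → ∀ B : Matrix (Fin m) (Fin m) ℂ,
        matrixOpNorm (Matrix.of fun i j => (Real.exp (-t * a (i, j)) : ℂ) * B i j)
          ≤ matrixOpNorm B)
      ↔ Nonempty (SqDistInnerRepr a) := by
  refine (semigroup_contractive_schur_multipliers_iff_finite_general (𝕜 := ℂ) a).trans ⟨?_, ?_⟩
  · rintro ⟨H, _, _, α, β, ha⟩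
    exact ⟨⟨H, α, β, ha⟩⟩
  · rintro ⟨⟨H, α, β, ha⟩⟩
    exact ⟨H, _, inferInstance, α, β, ha⟩
end
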